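/- arXiv:0801.4156 — 2 statements merged into one kernel-verified Lean document; each statement's English description precedes it below -/
import Mathlib

section
/- Fix m ∈ (0,1). For each N ∈ ℕ, let ν_N be the uniform probability measure on the set X_{N,⌊Nm⌋} of configurations η : ℤ/Nℤ → {0,1} with exactly ⌊Nm⌋ ones, and let π_N(η) := (1/N) Σ_{x ∈ ℤ/Nℤ} η(x) δ_{x/N}, a finite measure on the circle Λ = ℝ/ℤ. Then the laws of π_N under ν_N satisfy a large deviation principle with speed N and rate function S₁: for every set C of finite Borel measures on Λ closed in the weak topology, limsup_{N→∞} N⁻¹ log ν_N({η : π_N(η) ∈ C}) ≤ − inf_{ρ∈C} S₁(ρ), and for every weakly open set O, liminf_{N→∞} N⁻¹ log ν_N({η : π_N(η) ∈ O}) ≥ − inf_{ρ∈O} S₁(ρ). -/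
open MeasureTheory Set Filter Topology
open scoped ENNReal NNReal

noncomputable section

instance fact01 : Fact ((0:ℝ) < 1) := ⟨zero_lt_one⟩

/-- The circle `ℝ/ℤ`. -/
abbrev Circle' : Type := AddCircle (1:ℝ)

/-- The Dirac measure at a point, as a finite measure. -/
noncomputable def diracFM (y : Circle') : FiniteMeasure Circle' :=
  ⟨Measure.dirac y, inferInstance⟩

/-- The empirical measure of a TASEP configuration (encoded as the finset of occupied
sites): `π_N(η) = N⁻¹ ∑_{x} η(x) δ_{x/N}`. -/
noncomputable def empTASEP (N : ℕ) (S : Finset (ZMod N)) : FiniteMeasure Circle' :=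
  ((N : ℝ≥0))⁻¹ • ∑ x ∈ S, diracFM (((x.val : ℝ) / (N : ℝ) : ℝ) : Circle')

/-- `h_m(x) = x log(x/m) + (1-x) log((1-x)/(1-m))`, with the convention `0 log 0 = 0`. -/
noncomputable def hFun (m x : ℝ) : ℝ :=
  x * Real.log (x / m) + (1 - x) * Real.log ((1 - x) / (1 - m))

open Classical in
/-- The rate functional `S₁` for the TASEP: `∫ h_m(f)` if `ρ` is absolutely continuous
with density `f`, `0 ≤ f ≤ 1` a.e. and total mass `m`; `+∞` otherwise. -/
noncomputable def rateTASEP (m : ℝ) (ρ : FiniteMeasure Circle') : ℝ≥0∞ :=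
  if (ρ : Measure Circle') ≪ (volume : Measure Circle')
      ∧ (∀ᵐ u ∂(volume : Measure Circle'),
          (((ρ : Measure Circle').rnDeriv volume u)).toReal ≤ 1)
      ∧ (ρ : Measure Circle') Set.univ = ENNReal.ofReal m
  then ENNReal.ofReal
    (∫ u, hFun m (((ρ : Measure Circle').rnDeriv volume u).toReal) ∂(volume : Measure Circle'))
  else ⊤

/-- The probability, under the uniform measure on configurations of `⌊Nm⌋` particles on
`ℤ/Nℤ`, that the empirical measure belongs to `C`. -/
noncomputable def probTASEP (m : ℝ) (N : ℕ) (C : Set (FiniteMeasure Circle')) : ℝ≥0∞ :=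
  ({S : Finset (ZMod N) | S.card = ⌊(N : ℝ) * m⌋₊ ∧ empTASEP N S ∈ C}.ncard : ℝ≥0∞)
    / (N.choose ⌊(N : ℝ) * m⌋₊ : ℝ≥0∞)

/-!
Upper bound: tilting independent Bernoulli sites by `exp (φ (x / N))` and applying Chebyshev's
inequality bounds the exponential rate of `{μ | a < ∫ φ dμ}` by `∫ bernoulliCGF m ∘ φ - a`. Half
spaces of this form give every point of a closed set a neighbourhood with the right rate, because
`S₁` is the Legendre transform of `φ ↦ ∫ bernoulliCGF m ∘ φ` on the measures of mass `m`, and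
finitely many such neighbourhoods suffice because the measures of mass at most `1` form a compact
set.

Lower bound: near a measure `ρ` with density in `[0, 1]`, fill each of `k` equal arcs with a
prescribed number of particles that follows the distribution function of `ρ`. The number of such
configurations is a product of binomial coefficients, whose exponential rate is an average of
binary entropies of the mean densities of the arcs; by Jensen's inequality it is at least the
entropy of the density of `ρ`.
-/

open scoped BoundedContinuousFunction

/-! ### Exponential growth rates -/

section ExpGrowth

variable {u : ℕ → ℝ≥0∞} {x : ℕ → ℝ} {a : ℝ}

lemma log_ofReal_exp_mul_div {N : ℕ} (hN : N ≠ 0) (y : ℝ) :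
    ENNReal.log (ENNReal.ofReal (Real.exp (N * y))) / N = (y : EReal) := by
  rw [ENNReal.log_ofReal_of_pos (Real.exp_pos _), Real.log_exp, ← EReal.coe_natCast,
    ← EReal.coe_div, mul_div_cancel_left₀ _ (Nat.cast_ne_zero.2 hN)]

lemma tendsto_log_ofReal_exp_mul_div (hx : Tendsto x atTop (𝓝 a)) :
    Tendsto (fun N : ℕ ↦ ENNReal.log (ENNReal.ofReal (Real.exp (N * x N))) / N) atTop
      (𝓝 (a : EReal)) := by
  refine ((continuous_coe_real_ereal.tendsto a).comp hx).congr' ?_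
  filter_upwards [eventually_ne_atTop 0] with N hN
  exact (log_ofReal_exp_mul_div hN _).symm

lemma expGrowthSup_le_of_tendsto
    (h : ∀ᶠ N : ℕ in atTop, u N ≤ ENNReal.ofReal (Real.exp (N * x N)))
    (hx : Tendsto x atTop (𝓝 a)) : ExpGrowth.expGrowthSup u ≤ a :=
  (ExpGrowth.expGrowthSup_eventually_monotone h).trans_eq
    (tendsto_log_ofReal_exp_mul_div hx).limsup_eq

lemma le_expGrowthInf_of_tendsto
    (h : ∀ᶠ N : ℕ in atTop, ENNReal.ofReal (Real.exp (N * x N)) ≤ u N)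
    (hx : Tendsto x atTop (𝓝 a)) : a ≤ ExpGrowth.expGrowthInf u :=
  (tendsto_log_ofReal_exp_mul_div hx).liminf_eq.symm.trans_le
    (ExpGrowth.expGrowthInf_eventually_monotone h)

end ExpGrowth

/-! ### Entropy asymptotics of binomial coefficients -/

/-- The remainder `log n! - (n log n - n)` in the crude form of Stirling's formula. -/
def stirlingRemainder (n : ℕ) : ℝ := Real.log (n.factorial : ℝ) - (n * Real.log n - n)

lemma stirlingRemainder_nonneg (n : ℕ) : 0 ≤ stirlingRemainder n := by
  rcases eq_or_ne n 0 with rfl | hn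
  · simp [stirlingRemainder]
  have h := Stirling.le_log_factorial_stirling hn
  have hlog : 0 ≤ Real.log n := Real.log_natCast_nonneg n
  have hpi : 0 ≤ Real.log (2 * Real.pi) := Real.log_nonneg (by linarith [Real.pi_gt_three])
  rw [stirlingRemainder]
  linarith

lemma stirlingRemainder_succ_le (n : ℕ) : stirlingRemainder (n + 1) ≤ Real.log (n + 1) + 1 := by
  induction n with
  | zero => simp [stirlingRemainder]
  | succ n ih =>
    have hfact : Real.log ((n + 2).factorial : ℝ)
        = Real.log (n + 2) + Real.log ((n + 1).factorial : ℝ) := by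
      rw [Nat.factorial_succ, Nat.cast_mul, Real.log_mul (by positivity) (by positivity)]
      push_cast
      ring_nf
    have hinc : 1 ≤ (n + 2) * (Real.log (n + 2) - Real.log (n + 1)) := by
      have h := Real.one_sub_inv_le_log_of_pos (x := ((n : ℝ) + 2) / (n + 1)) (by positivity)
      rw [Real.log_div (by positivity) (by positivity), inv_div] at h
      calc (1 : ℝ) = (n + 2) * (1 - (n + 1) / (n + 2)) := by field_simp; ring
        _ ≤ _ := by gcongr
    simp only [stirlingRemainder, hfact] at ih ⊢
    push_cast at ih ⊢
    rw [show (n : ℝ) + 1 + 1 = n + 2 by ring]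
    linarith

lemma stirlingRemainder_le {n L : ℕ} (h : n ≤ L) : stirlingRemainder n ≤ Real.log (L + 1) + 1 := by
  have hlog : Real.log (n + 1) ≤ Real.log (L + 1) := by gcongr
  refine le_trans ?_ (add_le_add_left hlog 1)
  rcases n with _ | n
  · simp [stirlingRemainder]
  · refine (stirlingRemainder_succ_le n).trans ?_
    push_cast
    gcongr
    linarith

lemma mul_binEntropy_div {n L : ℝ} (hn : 0 ≤ n) (hnL : n ≤ L) :
    L * Real.binEntropy (n / L)
      = L * Real.log L - n * Real.log n - (L - n) * Real.log (L - n) := by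
  rcases (hn.trans hnL).eq_or_lt with rfl | hL
  · simp [le_antisymm hnL hn]
  have key (y : ℝ) : L * (y / L * Real.log (y / L)⁻¹) = y * Real.log L - y * Real.log y := by
    rcases eq_or_ne y 0 with rfl | hy
    · simp
    rw [Real.log_inv, Real.log_div hy hL.ne']
    field_simp
    ring
  rw [Real.binEntropy, mul_add, one_sub_div hL.ne', key, key]
  ring

lemma log_choose_sub_mul_binEntropy {n L : ℕ} (h : n ≤ L) :
    Real.log (L.choose n : ℝ) - L * Real.binEntropy (n / L)
      = stirlingRemainder L - stirlingRemainder n - stirlingRemainder (L - n) := by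
  have hfact : Real.log (L.factorial : ℝ) = Real.log (L.choose n : ℝ)
      + Real.log (n.factorial : ℝ) + Real.log ((L - n).factorial : ℝ) := by
    have hpos : (0 : ℝ) < L.choose n := by exact_mod_cast Nat.choose_pos h
    rw [← Nat.choose_mul_factorial_mul_factorial h]
    push_cast
    rw [Real.log_mul (by positivity) (by positivity), Real.log_mul (by positivity) (by positivity)]
  simp only [mul_binEntropy_div (Nat.cast_nonneg n) (Nat.cast_le.2 h), stirlingRemainder, hfact,
    Nat.cast_sub h]
  ring

lemma abs_log_choose_sub_mul_binEntropy_le {n L : ℕ} (h : n ≤ L) :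
    |Real.log (L.choose n : ℝ) - L * Real.binEntropy (n / L)| ≤ 2 * (Real.log (L + 1) + 1) := by
  rw [log_choose_sub_mul_binEntropy h, abs_le]
  have hL := stirlingRemainder_le le_rfl (n := L)
  have hn := stirlingRemainder_le h
  have hLn := stirlingRemainder_le (L.sub_le n)
  constructor <;> linarith [stirlingRemainder_nonneg L, stirlingRemainder_nonneg n,
    stirlingRemainder_nonneg (L - n)]

lemma tendsto_log_natCast_add_one_add_one_div :
    Tendsto (fun N : ℕ ↦ (Real.log (N + 1) + 1) / N) atTop (𝓝 0) := by
  have hlog : (fun x : ℝ ↦ Real.log (x + 1)) =o[atTop] (fun x : ℝ ↦ x) := by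
    refine (Real.isLittleO_log_id_atTop.comp_tendsto
      (tendsto_atTop_add_const_right atTop 1 tendsto_id)).trans_isBigO ?_
    exact (Asymptotics.isBigO_refl _ _).add
      (Asymptotics.isLittleO_const_id_atTop (1 : ℝ)).isBigO
  exact ((hlog.add (Asymptotics.isLittleO_const_id_atTop (1 : ℝ))).tendsto_div_nhds_zero).comp
    tendsto_natCast_atTop_atTop

lemma tendsto_log_choose_div {L n : ℕ → ℕ} {l p : ℝ} (hl : 0 < l) (hn : ∀ N, n N ≤ L N)
    (hL : Tendsto (fun N : ℕ ↦ (L N : ℝ) / N) atTop (𝓝 l))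
    (hp : Tendsto (fun N : ℕ ↦ (n N : ℝ) / N) atTop (𝓝 p)) :
    Tendsto (fun N : ℕ ↦ Real.log ((L N).choose (n N) : ℝ) / N) atTop
      (𝓝 (l * Real.binEntropy (p / l))) := by
  have hmain : Tendsto (fun N : ℕ ↦ (L N : ℝ) / N * Real.binEntropy (n N / L N)) atTop
      (𝓝 (l * Real.binEntropy (p / l))) := by
    refine hL.mul ((Real.binEntropy_continuous.tendsto _).comp ?_)
    refine (hp.div hL hl.ne').congr' ?_
    filter_upwards [eventually_ne_atTop 0] with N hN
    exact div_div_div_cancel_right₀ (Nat.cast_ne_zero.2 hN) _ _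
  have hLtop : Tendsto L atTop atTop := by
    rw [← tendsto_natCast_atTop_iff (R := ℝ)]
    refine (hL.pos_mul_atTop hl tendsto_natCast_atTop_atTop).congr' ?_
    filter_upwards [eventually_ne_atTop 0] with N hN
    exact div_mul_cancel₀ _ (Nat.cast_ne_zero.2 hN)
  have herr : Tendsto (fun N : ℕ ↦ 2 * ((Real.log (L N + 1) + 1) / L N) * ((L N : ℝ) / N)) atTop
      (𝓝 0) := by
    simpa using ((tendsto_log_natCast_add_one_add_one_div.comp hLtop).const_mul 2).mul hL
  refine tendsto_of_tendsto_of_dist hmain (squeeze_zero' (.of_forall fun _ ↦ dist_nonneg) ?_ herr)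
  filter_upwards [hLtop.eventually_ne_atTop 0] with N hLN
  have hLN : (L N : ℝ) ≠ 0 := Nat.cast_ne_zero.2 hLN
  have h := abs_log_choose_sub_mul_binEntropy_le (hn N)
  rw [dist_comm, Real.dist_eq]
  calc |Real.log ((L N).choose (n N) : ℝ) / N - L N / N * Real.binEntropy (n N / L N)|
      = |Real.log ((L N).choose (n N) : ℝ) - L N * Real.binEntropy (n N / L N)| / N := by
        rw [← Nat.abs_cast N, ← abs_div, Nat.abs_cast]
        ring_nf
    _ ≤ 2 * (Real.log (L N + 1) + 1) / N := by gcongr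
    _ = _ := by field_simp

lemma tendsto_nat_floor_natCast_mul_div {m : ℝ} (hm : 0 ≤ m) :
    Tendsto (fun N : ℕ ↦ (⌊(N : ℝ) * m⌋₊ : ℝ) / N) atTop (𝓝 m) := by
  simpa only [Function.comp_def, mul_comm] using
    (tendsto_nat_floor_mul_div_atTop hm).comp tendsto_natCast_atTop_atTop

lemma nat_floor_natCast_mul_le {m : ℝ} (hm : m ≤ 1) (N : ℕ) : ⌊(N : ℝ) * m⌋₊ ≤ N :=
  Nat.floor_le_of_le (mul_le_of_le_one_right N.cast_nonneg hm)

lemma tendsto_log_choose_floor_div {m : ℝ} (hm0 : 0 ≤ m) (hm1 : m ≤ 1) :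
    Tendsto (fun N : ℕ ↦ Real.log (N.choose ⌊(N : ℝ) * m⌋₊ : ℝ) / N) atTop
      (𝓝 (Real.binEntropy m)) := by
  have hid : Tendsto (fun N : ℕ ↦ (N : ℝ) / N) atTop (𝓝 1) :=
    tendsto_const_nhds.congr' <| (eventually_ne_atTop 0).mono fun N hN ↦
      (div_self (Nat.cast_ne_zero.2 hN)).symm
  simpa using tendsto_log_choose_div one_pos (nat_floor_natCast_mul_le hm1) hid
    (tendsto_nat_floor_natCast_mul_div hm0)

/-! ### The Bernoulli rate function and its Legendre transform -/

lemma hFun_eq_neg_binEntropy_sub {m : ℝ} (hm0 : 0 < m) (hm1 : m < 1) (x : ℝ) :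
    hFun m x = -Real.binEntropy x - x * Real.log m - (1 - x) * Real.log (1 - m) := by
  have key {c : ℝ} (hc : c ≠ 0) (y : ℝ) :
      y * Real.log (y / c) = y * Real.log y - y * Real.log c := by
    rcases eq_or_ne y 0 with rfl | hy
    · simp
    · rw [Real.log_div hy hc, mul_sub]
  rw [hFun, key hm0.ne', key (sub_pos.2 hm1).ne', Real.binEntropy, Real.log_inv, Real.log_inv]
  ring

lemma continuous_hFun {m : ℝ} (hm0 : 0 < m) (hm1 : m < 1) : Continuous (hFun m) := by
  rw [funext (hFun_eq_neg_binEntropy_sub hm0 hm1)]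
  have := Real.binEntropy_continuous
  fun_prop

lemma mul_log_div_add_mul_log_le {b c x y : ℝ} (hb : 0 < b) (hc : 0 < c) (hx : 0 ≤ x)
    (h : c * x ≤ y) : x * Real.log (x / b) + x * Real.log c ≤ x * Real.log (y / b) := by
  rcases hx.eq_or_lt with rfl | hx
  · simp
  rw [← mul_add, ← Real.log_mul (by positivity) hc.ne', div_mul_eq_mul_div, mul_comm x c]
  gcongr

/-- The cumulant generating function `t ↦ log E[exp (t X)]` of a Bernoulli variable `X` with
parameter `m`; it is the Legendre transform of `hFun m`. -/
def bernoulliCGF (m t : ℝ) : ℝ := Real.log (1 - m + m * Real.exp t)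

section BernoulliCGF

variable {m : ℝ}

lemma bernoulliMGF_pos (hm0 : 0 < m) (hm1 : m < 1) (t : ℝ) : 0 < 1 - m + m * Real.exp t :=
  add_pos (sub_pos.2 hm1) (mul_pos hm0 (Real.exp_pos t))

lemma exp_bernoulliCGF (hm0 : 0 < m) (hm1 : m < 1) (t : ℝ) :
    Real.exp (bernoulliCGF m t) = 1 - m + m * Real.exp t :=
  Real.exp_log (bernoulliMGF_pos hm0 hm1 t)

lemma lipschitzWith_bernoulliCGF (hm0 : 0 < m) (hm1 : m < 1) :
    LipschitzWith 1 (bernoulliCGF m) := by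
  refine LipschitzWith.of_le_add fun s t ↦ ?_
  rw [← Real.exp_le_exp, Real.exp_add, exp_bernoulliCGF hm0 hm1, exp_bernoulliCGF hm0 hm1,
    Real.dist_eq, add_mul, mul_assoc, ← Real.exp_add]
  have h1m : 0 ≤ 1 - m := by linarith
  gcongr
  · exact le_mul_of_one_le_right h1m (Real.one_le_exp (abs_nonneg _))
  · linarith [le_abs_self (s - t)]

lemma bernoulliCGF_le_self (hm0 : 0 < m) (hm1 : m < 1) {t : ℝ} (ht : 0 ≤ t) :
    bernoulliCGF m t ≤ t := by
  rw [← Real.exp_le_exp, exp_bernoulliCGF hm0 hm1]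
  nlinarith [Real.one_le_exp ht]

lemma bernoulliCGF_log_sub_log (hm0 : 0 < m) (hm1 : m < 1) {y : ℝ} (hy0 : 0 < y)
    (hy1 : y < 1) :
    bernoulliCGF m (Real.log (y / m) - Real.log ((1 - y) / (1 - m)))
      = -Real.log ((1 - y) / (1 - m)) := by
  have h1m : 0 < 1 - m := by linarith
  have h1y : 0 < 1 - y := by linarith
  rw [bernoulliCGF, Real.exp_sub, Real.exp_log (by positivity), Real.exp_log (by positivity),
    ← Real.log_inv]
  congr 1
  field_simp
  ring

-- The optimal tilt for the density `x` is `log (x / m) - log ((1 - x) / (1 - m))`, which is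
-- infinite at `x = 0` and `x = 1`; moving `x` slightly towards `m` keeps it bounded.
lemma exists_continuous_hFun_sub_le (hm0 : 0 < m) (hm1 : m < 1) {η : ℝ} (hη : 0 < η) :
    ∃ G : ℝ → ℝ, Continuous G ∧
      ∀ x ∈ Icc (0 : ℝ) 1, hFun m x - η ≤ x * G x - bernoulliCGF m (G x) := by
  have h1m : 0 < 1 - m := by linarith
  set c := Real.exp (-η) with hc
  have hc0 : 0 < c := Real.exp_pos _
  have hc1 : 0 < 1 - c := sub_pos.2 (Real.exp_lt_one_iff.2 (neg_lt_zero.2 hη))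
  set w : ℝ → ℝ := fun x ↦ c * x + (1 - c) * m
  have hw0 : ∀ x ∈ Icc (0 : ℝ) 1, c * x ≤ w x := fun x _ ↦
    le_add_of_nonneg_right (mul_pos hc1 hm0).le
  have hw1 : ∀ x ∈ Icc (0 : ℝ) 1, c * (1 - x) ≤ 1 - w x := fun x _ ↦ by
    linarith [mul_pos hc1 h1m]
  have hw0' : ∀ x ∈ Icc (0 : ℝ) 1, 0 < w x := fun x hx ↦
    add_pos_of_nonneg_of_pos (mul_nonneg hc0.le hx.1) (mul_pos hc1 hm0)
  have hw1' : ∀ x ∈ Icc (0 : ℝ) 1, 0 < 1 - w x := fun x hx ↦ by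
    linarith [mul_pos hc1 h1m, mul_nonneg hc0.le (sub_nonneg.2 hx.2)]
  set G : ℝ → ℝ := fun x ↦ Real.log (w x / m) - Real.log ((1 - w x) / (1 - m))
  have hG : ContinuousOn G (Icc 0 1) :=
    (ContinuousOn.log (by fun_prop) fun x hx ↦ (div_pos (hw0' x hx) hm0).ne').sub
      (ContinuousOn.log (by fun_prop) fun x hx ↦ (div_pos (hw1' x hx) h1m).ne')
  refine ⟨IccExtend zero_le_one ((Icc 0 1).domRestrict G), hG.domRestrict.Icc_extend',
    fun x hx ↦ ?_⟩
  rw [IccExtend_of_mem _ _ hx, domRestrict_apply,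
    bernoulliCGF_log_sub_log hm0 hm1 (hw0' x hx) (sub_pos.1 (hw1' x hx))]
  have h0 := mul_log_div_add_mul_log_le hm0 hc0 hx.1 (hw0 x hx)
  have h1 := mul_log_div_add_mul_log_le h1m hc0 (sub_nonneg.2 hx.2) (hw1 x hx)
  rw [hc, Real.log_exp] at h0 h1
  simp only [hFun]
  linarith

end BernoulliCGF

/-! ### Duality -/

lemma integrable_comp_of_ae_mem_Icc {X : Type*} [MeasurableSpace X] {μ : Measure X}
    [IsFiniteMeasure μ] {f : X → ℝ} {a b : ℝ} (hf : AEMeasurable f μ)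
    (hfab : ∀ᵐ x ∂μ, f x ∈ Icc a b) {G : ℝ → ℝ} (hG : Continuous G) :
    Integrable (fun x ↦ G (f x)) μ := by
  obtain ⟨C, hC⟩ := isCompact_Icc.exists_bound_of_continuousOn hG.continuousOn
  exact .of_bound (hG.measurable.comp_aemeasurable hf).aestronglyMeasurable C
    (hfab.mono fun x hx ↦ hC _ hx)

lemma ae_toReal_rnDeriv_mem_Icc_of_le {X : Type*} [MeasurableSpace X] {μ ρ : Measure X}
    [SigmaFinite μ] (h : ρ ≤ μ) : ∀ᵐ x ∂μ, (ρ.rnDeriv μ x).toReal ∈ Icc (0 : ℝ) 1 := by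
  filter_upwards [Measure.rnDeriv_le_one_of_le h] with x hx
  exact ⟨ENNReal.toReal_nonneg, ENNReal.toReal_le_of_le_ofReal zero_le_one (by simpa using hx)⟩

lemma measure_le_of_forall_lintegral_le {X : Type*} [TopologicalSpace X] [HasOuterApproxClosed X]
    [MeasurableSpace X] [BorelSpace X] {μ ρ : Measure X} [IsFiniteMeasure μ] [IsFiniteMeasure ρ]
    [ρ.WeaklyRegular]
    (h : ∀ g : BoundedContinuousFunction X ℝ≥0, ∫⁻ x, g x ∂ρ ≤ ∫⁻ x, g x ∂μ) : ρ ≤ μ := by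
  have hclosed : ∀ F : Set X, IsClosed F → ρ F ≤ μ F := fun F hF ↦
    le_of_tendsto_of_tendsto' (HasOuterApproxClosed.tendsto_lintegral_apprSeq hF ρ)
      (HasOuterApproxClosed.tendsto_lintegral_apprSeq hF μ) fun n ↦ h _
  refine Measure.le_iff.2 fun A hA ↦ ?_
  rw [hA.measure_eq_iSup_isClosed_of_ne_top (measure_ne_top ρ A)]
  exact iSup₂_le fun F hFA ↦ iSup_le fun hF ↦ (hclosed F hF).trans (measure_mono hFA)

section Duality

variable {X : Type*} [TopologicalSpace X] [MeasurableSpace X]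

/-- The functional `φ ↦ ∫ φ dρ - ∫ Λ_m(φ) dμ`, with `Λ_m = bernoulliCGF m`. Its supremum over
bounded continuous `φ` is the rate of `ρ` in the absence of the constraint on the total mass. -/
def dualFunctional (m : ℝ) (μ ρ : Measure X) (φ : X →ᵇ ℝ) : ℝ :=
  ∫ x, φ x ∂ρ - ∫ x, bernoulliCGF m (φ x) ∂μ

variable [BorelSpace X] {m : ℝ} {μ ρ : Measure X}

lemma integrable_bernoulliCGF_comp [IsFiniteMeasure μ] (hm0 : 0 < m) (hm1 : m < 1)
    (φ : X →ᵇ ℝ) : Integrable (fun x ↦ bernoulliCGF m (φ x)) μ :=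
  (φ.comp _ (lipschitzWith_bernoulliCGF hm0 hm1)).integrable μ

lemma exists_lt_dualFunctional_of_not_le [HasOuterApproxClosed X] [IsFiniteMeasure μ]
    [IsFiniteMeasure ρ] [ρ.WeaklyRegular] (hm0 : 0 < m) (hm1 : m < 1) (h : ¬ ρ ≤ μ) (α : ℝ) :
    ∃ φ : X →ᵇ ℝ, α < dualFunctional m μ ρ φ := by
  obtain ⟨g, hg⟩ : ∃ g : X →ᵇ ℝ≥0, ∫⁻ x, g x ∂μ < ∫⁻ x, g x ∂ρ := by
    by_contra! hle
    exact h (measure_le_of_forall_lintegral_le hle)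
  set ψ : X →ᵇ ℝ := g.comp _ NNReal.isometry_coe.lipschitz
  have hψ : ∫ x, ψ x ∂μ < ∫ x, ψ x ∂ρ := by
    rw [lintegral_coe_eq_integral g (ψ.integrable μ), lintegral_coe_eq_integral g (ψ.integrable ρ)]
      at hg
    exact (ENNReal.ofReal_lt_ofReal_iff_of_nonneg (integral_nonneg fun x ↦ (g x).2)).1 hg
  obtain ⟨n, hn⟩ := Archimedean.arch (α + 1) (sub_pos.2 hψ)
  refine ⟨n • ψ, ?_⟩
  have hcgf : ∫ x, bernoulliCGF m ((n • ψ) x) ∂μ ≤ ∫ x, (n • ψ) x ∂μ :=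
    integral_mono (integrable_bernoulliCGF_comp hm0 hm1 _) ((n • ψ).integrable μ) fun x ↦
      bernoulliCGF_le_self hm0 hm1 (nsmul_nonneg (g x).2 n)
  have hsmul (ν : Measure X) : ∫ x, (n • ψ) x ∂ν = n • ∫ x, ψ x ∂ν := by
    simp [integral_const_mul]
  rw [hsmul] at hcgf
  rw [dualFunctional, hsmul]
  rw [smul_sub] at hn
  linarith

lemma exists_lt_integral_mul_sub_integral_bernoulliCGF [NormalSpace X] [μ.WeaklyRegular]
    [IsProbabilityMeasure μ] (hm0 : 0 < m) (hm1 : m < 1) {f : X → ℝ} (hf : AEMeasurable f μ)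
    (hf01 : ∀ᵐ x ∂μ, f x ∈ Icc (0 : ℝ) 1) {α : ℝ} (hα : α < ∫ x, hFun m (f x) ∂μ) :
    ∃ φ : X →ᵇ ℝ, α < ∫ x, f x * φ x ∂μ - ∫ x, bernoulliCGF m (φ x) ∂μ := by
  set η := (∫ x, hFun m (f x) ∂μ - α) / 4 with hη
  have hη0 : 0 < η := by linarith
  obtain ⟨G, hG, hGle⟩ := exists_continuous_hFun_sub_le hm0 hm1 hη0
  have hGf := integrable_comp_of_ae_mem_Icc hf hf01 hG
  have hhf := integrable_comp_of_ae_mem_Icc hf hf01 (continuous_hFun hm0 hm1)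
  obtain ⟨φ, hφ, hφi⟩ := hGf.exists_boundedContinuous_integral_sub_le hη0
  have hcgf := integrable_bernoulliCGF_comp (μ := μ) hm0 hm1 φ
  have hfφ : Integrable (fun x ↦ f x * φ x) μ := by
    refine hφi.bdd_mul (c := 1) hf.aestronglyMeasurable (hf01.mono fun x hx ↦ ?_)
    rw [Real.norm_of_nonneg hx.1]
    exact hx.2
  have hhfη : Integrable (fun x ↦ hFun m (f x) - η) μ := hhf.sub (integrable_const η)
  have hdiff : Integrable (fun x ↦ 2 * ‖G (f x) - φ x‖) μ := (hGf.sub hφi).norm.const_mul 2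
  have hpointwise : ∀ᵐ x ∂μ, hFun m (f x) - η - 2 * ‖G (f x) - φ x‖
      ≤ f x * φ x - bernoulliCGF m (φ x) := by
    filter_upwards [hf01] with x hx
    have hLip := (lipschitzWith_bernoulliCGF hm0 hm1).dist_le_mul (φ x) (G (f x))
    rw [NNReal.coe_one, one_mul, dist_comm (φ x), Real.dist_eq, dist_eq_norm] at hLip
    have hmul : f x * (G (f x) - φ x) ≤ ‖G (f x) - φ x‖ :=
      (mul_le_mul_of_nonneg_left (le_abs_self _) hx.1).trans
        (mul_le_of_le_one_left (abs_nonneg _) hx.2)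
    linarith [hGle _ hx, le_abs_self (bernoulliCGF m (φ x) - bernoulliCGF m (G (f x)))]
  refine ⟨φ, ?_⟩
  have hint : ∫ x, (hFun m (f x) - η - 2 * ‖G (f x) - φ x‖) ∂μ
      ≤ ∫ x, (f x * φ x - bernoulliCGF m (φ x)) ∂μ :=
    integral_mono_ae (hhfη.sub hdiff) (hfφ.sub hcgf) hpointwise
  rw [integral_sub hfφ hcgf, integral_sub hhfη hdiff,
    integral_sub hhf (integrable_const η), integral_const_mul, integral_const, probReal_univ,
    one_smul] at hint
  linarith

lemma exists_lt_dualFunctional_of_le [NormalSpace X] [μ.WeaklyRegular] [IsProbabilityMeasure μ]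
    [IsFiniteMeasure ρ] (hm0 : 0 < m) (hm1 : m < 1) (hle : ρ ≤ μ) {α : ℝ}
    (hα : α < ∫ x, hFun m (ρ.rnDeriv μ x).toReal ∂μ) :
    ∃ φ : X →ᵇ ℝ, α < dualFunctional m μ ρ φ := by
  obtain ⟨φ, hφ⟩ := exists_lt_integral_mul_sub_integral_bernoulliCGF hm0 hm1
    (Measure.measurable_rnDeriv ρ μ).ennreal_toReal.aemeasurable
    (ae_toReal_rnDeriv_mem_Icc_of_le hle) hα
  refine ⟨φ, ?_⟩
  rwa [dualFunctional, ← integral_rnDeriv_smul hle.absolutelyContinuous]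

end Duality

/-! ### Arcs of the circle -/

/-- The representative in `[0, 1)` of a point of the circle. -/
def coord (u : Circle') : ℝ := AddCircle.equivIco 1 0 u

lemma coord_mem_Ico (u : Circle') : coord u ∈ Ico (0 : ℝ) 1 := by
  simpa only [coord, zero_add] using (AddCircle.equivIco (1 : ℝ) 0 u).2

lemma coe_coord (u : Circle') : ((coord u : ℝ) : Circle') = u :=
  (AddCircle.equivIco (1 : ℝ) 0).symm_apply_apply u

lemma coord_coe {t : ℝ} (ht : t ∈ Ico (0 : ℝ) 1) : coord (t : Circle') = t := by
  rw [coord, AddCircle.equivIco_coe_eq (by rwa [zero_add])]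

lemma measurable_coord : Measurable coord :=
  measurable_subtype_coe.comp (AddCircle.measurableEquivIco (1 : ℝ) 0).measurable

lemma measurePreserving_coord : MeasurePreserving coord volume (volume.restrict (Ico 0 1)) := by
  have hmk := AddCircle.measurePreserving_mk (1 : ℝ) 0
  rw [zero_add, ← restrict_Ico_eq_restrict_Ioc] at hmk
  refine ⟨measurable_coord, ?_⟩
  rw [← hmk.map_eq, Measure.map_map measurable_coord hmk.measurable]
  refine (Measure.map_congr ?_).trans Measure.map_id
  filter_upwards [ae_restrict_mem measurableSet_Ico] with t ht using coord_coe ht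

lemma dist_le_abs_coord_sub_coord (u v : Circle') : dist u v ≤ |coord u - coord v| := by
  conv_lhs => rw [← coe_coord u, ← coe_coord v, dist_eq_norm, ← AddCircle.coe_sub]
  exact QuotientAddGroup.norm_mk_le_norm

/-- The half-open arc of the points of the circle with representative in `[s, t)`. -/
def arc (s t : ℝ) : Set Circle' := coord ⁻¹' Ico s t

lemma measurableSet_arc (s t : ℝ) : MeasurableSet (arc s t) := measurable_coord measurableSet_Ico

lemma volume_arc (s t : ℝ) : volume (arc s t) = ENNReal.ofReal (min t 1 - max s 0) := by
  rw [arc, measurePreserving_coord.measure_preimage measurableSet_Ico.nullMeasurableSet,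
    Measure.restrict_apply measurableSet_Ico, Ico_inter_Ico, Real.volume_Ico]

lemma volume_real_arc {s t : ℝ} (hs : 0 ≤ s) (hst : s ≤ t) (ht : t ≤ 1) :
    volume.real (arc s t) = t - s := by
  rw [measureReal_def, volume_arc, min_eq_left ht, max_eq_left hs,
    ENNReal.toReal_ofReal (sub_nonneg.2 hst)]

instance : IsProbabilityMeasure (volume : Measure Circle') := ⟨by simp⟩

/-- The `j`-th arc in the subdivision of the circle into `k` arcs of equal length. -/
def cell (k j : ℕ) : Set Circle' := arc (j / k) ((j + 1 : ℕ) / k)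

lemma measurableSet_cell (k j : ℕ) : MeasurableSet (cell k j) := measurableSet_arc _ _

lemma mem_cell_iff {k j : ℕ} (hk : k ≠ 0) {u : Circle'} :
    u ∈ cell k j ↔ ⌊coord u * k⌋₊ = j := by
  have hk' : (0 : ℝ) < k := by positivity
  rw [Nat.floor_eq_iff (mul_nonneg (coord_mem_Ico u).1 hk'.le), cell, arc, mem_preimage, mem_Ico,
    div_le_iff₀ hk', lt_div_iff₀ hk', Nat.cast_succ]

lemma pairwise_disjoint_cell {k : ℕ} (hk : k ≠ 0) : Pairwise (Function.onFun Disjoint (cell k)) :=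
  fun _ _ hij ↦ disjoint_left.2 fun _ hi hj ↦
    hij (((mem_cell_iff hk).1 hi).symm.trans ((mem_cell_iff hk).1 hj))

lemma pairwise_disjoint_cell_fin {k : ℕ} (hk : k ≠ 0) :
    Pairwise (Function.onFun Disjoint fun j : Fin k ↦ cell k j) :=
  (pairwise_disjoint_cell hk).comp_of_injective Fin.val_injective

lemma iUnion_cell {k : ℕ} (hk : k ≠ 0) : ⋃ j : Fin k, cell k j = univ := by
  refine eq_univ_of_forall fun u ↦ mem_iUnion.2 ⟨⟨⌊coord u * k⌋₊, ?_⟩, (mem_cell_iff hk).2 rfl⟩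
  have hk' : (0 : ℝ) < k := by positivity
  exact (Nat.floor_lt (mul_nonneg (coord_mem_Ico u).1 hk'.le)).2
    (mul_lt_of_lt_one_left hk' (coord_mem_Ico u).2)

lemma div_lt_one_of_fin {k : ℕ} (j : Fin k) : (j : ℝ) / k < 1 := by
  have hj : (j : ℝ) < k := by exact_mod_cast j.2
  exact (div_lt_one (j.1.cast_nonneg.trans_lt hj)).2 hj

lemma succ_div_le_one_of_fin {k : ℕ} (j : Fin k) : ((j + 1 : ℕ) : ℝ) / k ≤ 1 :=
  div_le_one_of_le₀ (by exact_mod_cast j.2) k.cast_nonneg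

lemma div_le_succ_div (k j : ℕ) : (j : ℝ) / k ≤ (j + 1 : ℕ) / k := by
  gcongr
  exact j.le_succ

lemma volume_real_cell {k : ℕ} (j : Fin k) : volume.real (cell k j) = 1 / k := by
  rw [cell, volume_real_arc (by positivity) (div_le_succ_div k j) (succ_div_le_one_of_fin j)]
  push_cast
  ring

lemma dist_left_endpoint_le {k : ℕ} (j : Fin k) {u : Circle'} (hu : u ∈ cell k j) :
    dist u ((j / k : ℝ) : Circle') ≤ 1 / k := by
  have hu' : (j : ℝ) / k ≤ coord u ∧ coord u < (j + 1 : ℕ) / k := hu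
  refine (dist_le_abs_coord_sub_coord _ _).trans ?_
  rw [coord_coe ⟨by positivity, div_lt_one_of_fin j⟩, abs_of_nonneg (sub_nonneg.2 hu'.1)]
  have hlen : ((j + 1 : ℕ) : ℝ) / k - j / k = 1 / k := by push_cast; ring
  linarith

/-! ### Weak convergence through the masses of cells -/

section Partition

variable {X ι : Type*} [MeasurableSpace X] [Fintype ι] {A : ι → Set X} {φ : X → ℝ} {c : ι → ℝ}
  {ε M : ℝ}

lemma abs_integral_sub_sum_le {μ : Measure X} [IsFiniteMeasure μ] (hA : ∀ i, MeasurableSet (A i))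
    (hdisj : Pairwise (Function.onFun Disjoint A)) (hunion : ⋃ i, A i = univ)
    (hφ : Integrable φ μ) (hc : ∀ i, ∀ x ∈ A i, |φ x - c i| ≤ ε) :
    |∫ x, φ x ∂μ - ∑ i, c i * μ.real (A i)| ≤ ε * μ.real univ := by
  have hpiece (i : ι) : |∫ x in A i, φ x ∂μ - c i * μ.real (A i)| ≤ ε * μ.real (A i) := by
    have hsub : ∫ x in A i, φ x ∂μ - c i * μ.real (A i) = ∫ x in A i, (φ x - c i) ∂μ := by
      rw [integral_sub hφ.integrableOn (integrable_const _), setIntegral_const, smul_eq_mul,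
        mul_comm]
    rw [hsub]
    exact norm_setIntegral_le_of_norm_le_const (f := fun x ↦ φ x - c i) (measure_lt_top _ _) (hc i)
  have hdec : ∫ x, φ x ∂μ = ∑ i, ∫ x in A i, φ x ∂μ := by
    rw [← integral_iUnion_fintype hA hdisj fun i ↦ hφ.integrableOn, hunion, Measure.restrict_univ]
  rw [hdec, ← Finset.sum_sub_distrib, ← hunion, measureReal_iUnion_fintype hdisj hA,
    Finset.mul_sum]
  exact (Finset.abs_sum_le_sum_abs _ _).trans (Finset.sum_le_sum fun i _ ↦ hpiece i)

lemma abs_integral_sub_integral_le {μ ρ : Measure X} [IsFiniteMeasure μ] [IsFiniteMeasure ρ]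
    (hA : ∀ i, MeasurableSet (A i)) (hdisj : Pairwise (Function.onFun Disjoint A))
    (hunion : ⋃ i, A i = univ) (hμ : Integrable φ μ) (hρ : Integrable φ ρ)
    (hc : ∀ i, ∀ x ∈ A i, |φ x - c i| ≤ ε) (hM : ∀ i, |c i| ≤ M) :
    |∫ x, φ x ∂μ - ∫ x, φ x ∂ρ|
      ≤ ε * (μ.real univ + ρ.real univ) + M * ∑ i, |μ.real (A i) - ρ.real (A i)| := by
  have hstep : |∑ i, c i * μ.real (A i) - ∑ i, c i * ρ.real (A i)|
      ≤ M * ∑ i, |μ.real (A i) - ρ.real (A i)| := by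
    rw [← Finset.sum_sub_distrib, Finset.mul_sum]
    refine (Finset.abs_sum_le_sum_abs _ _).trans (Finset.sum_le_sum fun i _ ↦ ?_)
    rw [← mul_sub, abs_mul]
    exact mul_le_mul_of_nonneg_right (hM i) (abs_nonneg _)
  have h1 := abs_integral_sub_sum_le hA hdisj hunion hμ hc
  have h2 := abs_integral_sub_sum_le hA hdisj hunion hρ hc
  rw [abs_le] at *
  constructor <;> linarith [h1.1, h1.2, h2.1, h2.2, hstep.1, hstep.2]

end Partition

/-- The finite measures whose masses on the `k` cells are within total error `1 / k` of those of
`ρ`; these sets shrink to `ρ` in the weak topology, although they are not weakly open. -/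
def cellNhd (ρ : FiniteMeasure Circle') (k : ℕ) : Set (FiniteMeasure Circle') :=
  {μ | ∑ j : Fin k, |(μ : Measure Circle').real (cell k j) - (ρ : Measure Circle').real (cell k j)|
    ≤ 1 / k}

lemma real_univ_eq_sum_cell {k : ℕ} (hk : k ≠ 0) (μ : Measure Circle') [IsFiniteMeasure μ] :
    μ.real univ = ∑ j : Fin k, μ.real (cell k j) := by
  rw [← iUnion_cell hk, measureReal_iUnion_fintype (pairwise_disjoint_cell_fin hk)
    fun j ↦ measurableSet_cell k j]

lemma real_univ_le_of_mem_cellNhd {ρ μ : FiniteMeasure Circle'} {k : ℕ} (hk : k ≠ 0)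
    (h : μ ∈ cellNhd ρ k) :
    (μ : Measure Circle').real univ ≤ (ρ : Measure Circle').real univ + 1 / k := by
  rw [real_univ_eq_sum_cell hk, real_univ_eq_sum_cell hk]
  have hsum : ∑ j : Fin k, ((μ : Measure Circle').real (cell k j)
      - (ρ : Measure Circle').real (cell k j)) ≤ 1 / k :=
    (Finset.sum_le_sum fun j _ ↦ le_abs_self _).trans h
  rw [Finset.sum_sub_distrib] at hsum
  linarith

lemma abs_integral_sub_integral_le_of_mem_cellNhd {ρ μ : FiniteMeasure Circle'} {k : ℕ}
    (hk : k ≠ 0) (h : μ ∈ cellNhd ρ k) (φ : Circle' →ᵇ ℝ) {ε : ℝ} (hε : 0 ≤ ε)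
    (hφ : ∀ u v, dist u v ≤ 1 / k → |φ u - φ v| ≤ ε) :
    |∫ u, φ u ∂(μ : Measure Circle') - ∫ u, φ u ∂(ρ : Measure Circle')|
      ≤ ε * (2 * (ρ : Measure Circle').real univ + 1 / k) + ‖φ‖ * (1 / k) := by
  refine (abs_integral_sub_integral_le (fun j : Fin k ↦ measurableSet_cell k j)
    (pairwise_disjoint_cell_fin hk) (iUnion_cell hk) (φ.integrable _) (φ.integrable _)
    (fun j u hu ↦ hφ _ _ (dist_left_endpoint_le j hu)) fun j ↦ φ.norm_coe_le_norm _).trans ?_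
  have hmass := real_univ_le_of_mem_cellNhd hk h
  exact add_le_add (mul_le_mul_of_nonneg_left (by linarith) hε)
    (mul_le_mul_of_nonneg_left h (norm_nonneg φ))

lemma tendsto_of_mem_cellNhd {ρ : FiniteMeasure Circle'} {μ : ℕ → FiniteMeasure Circle'}
    (h : ∀ k, μ k ∈ cellNhd ρ k) : Tendsto μ atTop (𝓝 ρ) := by
  refine FiniteMeasure.tendsto_of_forall_integral_tendsto fun φ ↦
    Metric.tendsto_nhds.2 fun ε hε ↦ ?_
  set R := (ρ : Measure Circle').real univ
  have : 0 ≤ R := measureReal_nonneg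
  have hε' : 0 < ε / (2 * R + 1) := by positivity
  obtain ⟨δ, hδ, hφδ⟩ := Metric.uniformContinuous_iff.1
    (CompactSpace.uniformContinuous_of_continuous φ.continuous) _ hε'
  have hinv := tendsto_one_div_atTop_nhds_zero_nat (𝕜 := ℝ)
  have hbound : Tendsto (fun k : ℕ ↦ ε / (2 * R + 1) * (2 * R + 1 / k) + ‖φ‖ * (1 / k)) atTop
      (𝓝 (ε / (2 * R + 1) * (2 * R + 0) + ‖φ‖ * 0)) :=
    ((hinv.const_add _).const_mul _).add (hinv.const_mul _)
  have hlim : ε / (2 * R + 1) * (2 * R + 0) + ‖φ‖ * 0 < ε := by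
    rw [add_zero, mul_zero, add_zero, div_mul_eq_mul_div, div_lt_iff₀ (by positivity)]
    linarith
  filter_upwards [hbound.eventually (gt_mem_nhds hlim), hinv.eventually (gt_mem_nhds hδ),
    eventually_ne_atTop 0] with k hkε hkδ hk
  exact (abs_integral_sub_integral_le_of_mem_cellNhd hk (h k) φ hε'.le
    fun u v huv ↦ (hφδ (huv.trans_lt hkδ)).le).trans_lt hkε

lemma exists_cellNhd_subset {ρ : FiniteMeasure Circle'} {O : Set (FiniteMeasure Circle')}
    (hO : O ∈ 𝓝 ρ) : ∃ k ≠ 0, cellNhd ρ k ⊆ O := by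
  by_contra! h
  have hex (k : ℕ) : ∃ μ ∈ cellNhd ρ k, k ≠ 0 → μ ∉ O := by
    rcases eq_or_ne k 0 with rfl | hk
    · exact ⟨ρ, by simp [cellNhd], fun h ↦ (h rfl).elim⟩
    · obtain ⟨μ, hμ, hμO⟩ := not_subset.1 (h k hk)
      exact ⟨μ, hμ, fun _ ↦ hμO⟩
  choose μ hμ hμO using hex
  obtain ⟨k, hkO, hk⟩ :=
    (((tendsto_of_mem_cellNhd hμ).eventually hO).and (eventually_ne_atTop 0)).exists
  exact hμO k hk hkO

lemma tendsto_of_tendsto_cell {ρ : FiniteMeasure Circle'} {ι : Type*} {l : Filter ι}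
    {μ : ι → FiniteMeasure Circle'}
    (h : ∀ k, ∀ j : Fin k, Tendsto (fun i ↦ (μ i : Measure Circle').real (cell k j)) l
      (𝓝 ((ρ : Measure Circle').real (cell k j)))) : Tendsto μ l (𝓝 ρ) := by
  refine tendsto_def.2 fun O hO ↦ ?_
  obtain ⟨k, hk, hkO⟩ := exists_cellNhd_subset hO
  have hsum : Tendsto (fun i ↦ ∑ j : Fin k, |(μ i : Measure Circle').real (cell k j)
      - (ρ : Measure Circle').real (cell k j)|) l (𝓝 0) := by
    simpa using tendsto_finsetSum Finset.univ fun j _ ↦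
      ((h k j).sub_const ((ρ : Measure Circle').real (cell k j))).abs
  have hk' : (0 : ℝ) < 1 / k := by positivity
  filter_upwards [hsum.eventually (gt_mem_nhds hk')] with i hi using hkO hi.le

/-! ### Empirical measures of configurations -/

/-- The point `x / N` of the circle attached to the site `x` of `ℤ/Nℤ`. -/
def site (N : ℕ) (x : ZMod N) : Circle' := ((x.val / N : ℝ) : Circle')

lemma coord_site {N : ℕ} [NeZero N] (x : ZMod N) : coord (site N x) = x.val / N :=
  coord_coe ⟨by positivity,
    (div_lt_one (by exact_mod_cast NeZero.pos N)).2 (by exact_mod_cast x.val_lt)⟩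

lemma toMeasure_empTASEP (N : ℕ) (S : Finset (ZMod N)) :
    (empTASEP N S : Measure Circle') = (N : ℝ≥0)⁻¹ • ∑ x ∈ S, Measure.dirac (site N x) := by
  rw [empTASEP, FiniteMeasure.toMeasure_smul, FiniteMeasure.toMeasure_sum]
  rfl

lemma integral_empTASEP (N : ℕ) (S : Finset (ZMod N)) (φ : Circle' →ᵇ ℝ) :
    ∫ u, φ u ∂(empTASEP N S : Measure Circle') = (N : ℝ)⁻¹ * ∑ x ∈ S, φ (site N x) := by
  rw [toMeasure_empTASEP, integral_smul_nnreal_measure,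
    integral_finsetSum_measure fun _ _ ↦ φ.integrable _]
  simp only [integral_dirac, NNReal.smul_def, NNReal.coe_inv, NNReal.coe_natCast, smul_eq_mul]

open Classical in
lemma real_empTASEP (N : ℕ) (S : Finset (ZMod N)) {A : Set Circle'} (hA : MeasurableSet A) :
    (empTASEP N S : Measure Circle').real A = (S.filter fun x ↦ site N x ∈ A).card / N := by
  rw [toMeasure_empTASEP, measureReal_nnreal_smul_apply, measureReal_def, Measure.finsetSum_apply,
    ENNReal.toReal_sum fun _ _ ↦ measure_ne_top _ _, Finset.card_filter, NNReal.coe_inv,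
    NNReal.coe_natCast, Nat.cast_sum, div_eq_inv_mul]
  refine congrArg _ (Finset.sum_congr rfl fun x _ ↦ ?_)
  rw [Measure.dirac_apply' _ hA, indicator_apply]
  split_ifs <;> simp

lemma mass_empTASEP (N : ℕ) (S : Finset (ZMod N)) :
    ((empTASEP N S).mass : ℝ) = S.card / N := by
  simpa using real_empTASEP N S MeasurableSet.univ

/-- The first site `⌈N j / k⌉` of the `j`-th cell, as an integer in `[0, N]`. -/
def cellBoundary (N k j : ℕ) : ℕ := ⌈(N * (j / k) : ℝ)⌉₊

lemma cellBoundary_mono (N k : ℕ) : Monotone (cellBoundary N k) := fun i j hij ↦ by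
  unfold cellBoundary
  gcongr

lemma cellBoundary_zero (N k : ℕ) : cellBoundary N k 0 = 0 := by simp [cellBoundary]

lemma cellBoundary_self (N : ℕ) {k : ℕ} (hk : k ≠ 0) : cellBoundary N k k = N := by
  rw [cellBoundary, div_self (by positivity), mul_one, Nat.ceil_natCast]

lemma cellBoundary_le (N : ℕ) {k j : ℕ} (hjk : j ≤ k) : cellBoundary N k j ≤ N :=
  Nat.ceil_le.2 (mul_le_of_le_one_right N.cast_nonneg
    (div_le_one_of_le₀ (by exact_mod_cast hjk) k.cast_nonneg))

lemma tendsto_cellBoundary_div (k j : ℕ) :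
    Tendsto (fun N : ℕ ↦ (cellBoundary N k j : ℝ) / N) atTop (𝓝 (j / k)) := by
  simp only [cellBoundary, mul_comm _ ((j : ℝ) / k)]
  exact (tendsto_nat_ceil_mul_div_atTop (by positivity)).comp tendsto_natCast_atTop_atTop

lemma site_mem_cell_iff {N : ℕ} [NeZero N] {k j : ℕ} {x : ZMod N} :
    site N x ∈ cell k j ↔ x.val ∈ Finset.Ico (cellBoundary N k j) (cellBoundary N k (j + 1)) := by
  have hN : (0 : ℝ) < N := by exact_mod_cast NeZero.pos N
  rw [cell, arc, mem_preimage, coord_site, mem_Ico, Finset.mem_Ico, cellBoundary, cellBoundary,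
    Nat.ceil_le, Nat.lt_ceil, le_div_iff₀' hN, div_lt_iff₀' hN]

lemma sum_zmod_val {M : Type*} [AddCommMonoid M] (N : ℕ) [NeZero N] (f : ℕ → M) :
    ∑ x : ZMod N, f x.val = ∑ i ∈ Finset.range N, f i := by
  obtain _ | n := N
  · exact absurd rfl (NeZero.ne 0)
  · exact Fin.sum_univ_eq_sum_range f (n + 1)

lemma card_filter_val_mem {N : ℕ} [NeZero N] {I : Finset ℕ} (hI : I ⊆ Finset.range N) :
    (Finset.univ.filter fun x : ZMod N ↦ x.val ∈ I).card = I.card := by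
  rw [Finset.card_filter, sum_zmod_val N fun i ↦ if i ∈ I then 1 else 0, ← Finset.card_filter,
    Finset.filter_mem_eq_inter, Finset.inter_eq_right.2 hI]

open Classical in
/-- The set of the sites that lie in the cell `cell k j`. -/
def cellSites (N k j : ℕ) [NeZero N] : Finset (ZMod N) :=
  Finset.univ.filter fun x ↦ site N x ∈ cell k j

lemma card_cellSites {N k j : ℕ} [NeZero N] (hj : j < k) :
    (cellSites N k j).card = cellBoundary N k (j + 1) - cellBoundary N k j := by
  simp only [cellSites, site_mem_cell_iff]
  rw [card_filter_val_mem, Nat.card_Ico]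
  exact fun i hi ↦ Finset.mem_range.2 ((Finset.mem_Ico.1 hi).2.trans_le (cellBoundary_le N hj))

lemma tendsto_card_cellBoundary_sub_div (k j : ℕ) :
    Tendsto (fun N : ℕ ↦ ((cellBoundary N k (j + 1) - cellBoundary N k j : ℕ) : ℝ) / N) atTop
      (𝓝 (1 / k)) := by
  have hlim := (tendsto_cellBoundary_div k (j + 1)).sub (tendsto_cellBoundary_div k j)
  rw [← sub_div, Nat.cast_succ, add_sub_cancel_left] at hlim
  refine hlim.congr fun N ↦ ?_
  rw [Nat.cast_sub (cellBoundary_mono N k j.le_succ), sub_div]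

lemma real_cell_empTASEP {N : ℕ} [NeZero N] (S : Finset (ZMod N)) (k j : ℕ) :
    (empTASEP N S : Measure Circle').real (cell k j) = (S ∩ cellSites N k j).card / N := by
  classical
  rw [real_empTASEP N S (measurableSet_cell k j), cellSites, Finset.inter_filter,
    Finset.inter_univ]

lemma tendsto_empTASEP_univ :
    Tendsto (fun N ↦ empTASEP (N + 1) Finset.univ) atTop
      (𝓝 (⟨volume, inferInstance⟩ : FiniteMeasure Circle')) := by
  refine tendsto_of_tendsto_cell fun k j ↦ ?_
  simp only [real_cell_empTASEP, Finset.univ_inter, card_cellSites j.2, FiniteMeasure.toMeasure_mk,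
    volume_real_cell]
  exact (tendsto_add_atTop_iff_nat 1).2 (tendsto_card_cellBoundary_sub_div k j)

lemma tendsto_riemannSum (φ : Circle' →ᵇ ℝ) :
    Tendsto (fun N : ℕ ↦ (N : ℝ)⁻¹ * ∑ i ∈ Finset.range N, φ ((i / N : ℝ) : Circle')) atTop
      (𝓝 (∫ u, φ u)) := by
  refine (tendsto_add_atTop_iff_nat 1).1 ?_
  refine ((FiniteMeasure.tendsto_iff_forall_integral_tendsto.1 tendsto_empTASEP_univ φ).congr
    fun N ↦ ?_)
  rw [integral_empTASEP, ← sum_zmod_val (N + 1) fun i ↦ φ ((i / (N + 1 : ℕ) : ℝ) : Circle')]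
  rfl

/-! ### The exponential Chebyshev bound -/

lemma card_mul_le_exp_sum_bernoulliCGF {ι : Type*} [Fintype ι] {m : ℝ} (hm0 : 0 < m) (hm1 : m < 1)
    {g : ι → ℝ} {b : ℝ} {K : ℕ} {A : Finset (Finset ι)}
    (hA : ∀ S ∈ A, S.card = K ∧ b ≤ ∑ x ∈ S, g x) :
    A.card * (m ^ K * (1 - m) ^ (Fintype.card ι - K) * Real.exp b)
      ≤ Real.exp (∑ x, bernoulliCGF m (g x)) := by
  classical
  have : 0 < 1 - m := sub_pos.2 hm1
  set weight : Finset ι → ℝ := fun S ↦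
    (∏ x ∈ S, m * Real.exp (g x)) * ∏ x ∈ Finset.univ \ S, (1 - m)
  have hweight : Real.exp (∑ x, bernoulliCGF m (g x)) = ∑ S, weight S := by
    simp only [Real.exp_sum, exp_bernoulliCGF hm0 hm1, add_comm (1 - m)]
    rw [Finset.prod_add, Finset.powerset_univ]
  rw [hweight, ← nsmul_eq_mul]
  refine (Finset.card_nsmul_le_sum A weight _ fun S hS ↦ ?_).trans
    (Finset.sum_le_univ_sum_of_nonneg fun S ↦ by positivity)
  obtain ⟨hcard, hb⟩ := hA S hS
  calc m ^ K * (1 - m) ^ (Fintype.card ι - K) * Real.exp b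
      ≤ m ^ K * (1 - m) ^ (Fintype.card ι - K) * Real.exp (∑ x ∈ S, g x) := by gcongr
    _ = weight S := by
      rw [Real.exp_sum, ← hcard]
      simp only [weight, Finset.prod_mul_distrib, Finset.prod_const,
        Finset.card_sdiff_of_subset (Finset.subset_univ S), Finset.card_univ]
      ring

/-! ### The upper bound -/

section Probability

variable {m : ℝ} {N : ℕ} {C D : Set (FiniteMeasure Circle')}

lemma probTASEP_mono_of_card (hN : N ≠ 0)
    (h : ∀ S : Finset (ZMod N), S.card = ⌊N * m⌋₊ → empTASEP N S ∈ C → empTASEP N S ∈ D) :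
    probTASEP m N C ≤ probTASEP m N D := by
  have : NeZero N := ⟨hN⟩
  refine ENNReal.div_le_div_right (Nat.cast_le.2 (ncard_le_ncard ?_ (toFinite _))) _
  exact fun S hS ↦ ⟨hS.1, h S hS.1 hS.2⟩

lemma probTASEP_union_le : probTASEP m N (C ∪ D) ≤ probTASEP m N C + probTASEP m N D := by
  unfold probTASEP
  rw [← ENNReal.add_div, ← Nat.cast_add]
  gcongr
  refine (congrArg ncard ?_).trans_le (ncard_union_le _ _)
  exact ext fun S ↦ and_or_left

lemma probTASEP_empty : probTASEP m N ∅ = 0 := by simp [probTASEP]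

lemma probTASEP_eq_ofReal (hm1 : m ≤ 1) (C : Set (FiniteMeasure Circle')) :
    probTASEP m N C = ENNReal.ofReal
      (({S : Finset (ZMod N) | S.card = ⌊N * m⌋₊ ∧ empTASEP N S ∈ C}.ncard : ℝ)
        / N.choose ⌊N * m⌋₊) := by
  have hchoose : (0 : ℝ) < N.choose ⌊N * m⌋₊ :=
    Nat.cast_pos.2 (Nat.choose_pos (nat_floor_natCast_mul_le hm1 N))
  rw [probTASEP, ENNReal.ofReal_div_of_pos hchoose, ENNReal.ofReal_natCast, ENNReal.ofReal_natCast]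

end Probability

section UpperBound

variable {m : ℝ} {ρ : FiniteMeasure Circle'}

lemma tendsto_log_choose_mul_pow_div (hm0 : 0 < m) (hm1 : m < 1) :
    Tendsto (fun N : ℕ ↦ Real.log (N.choose ⌊N * m⌋₊ * (m ^ ⌊N * m⌋₊ * (1 - m) ^ (N - ⌊N * m⌋₊)))
      / N) atTop (𝓝 0) := by
  have hfloor := tendsto_nat_floor_natCast_mul_div hm0.le
  have hlim := (tendsto_log_choose_floor_div hm0.le hm1.le).add
    ((hfloor.mul_const (Real.log m)).add ((hfloor.const_sub 1).mul_const (Real.log (1 - m))))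
  have hzero : Real.binEntropy m + (m * Real.log m + (1 - m) * Real.log (1 - m)) = 0 := by
    rw [Real.binEntropy, Real.log_inv, Real.log_inv]
    ring
  rw [hzero] at hlim
  refine hlim.congr' ?_
  filter_upwards [eventually_ne_atTop 0] with N hN
  have hfloor_le := nat_floor_natCast_mul_le hm1.le N
  have hchoose : (N.choose ⌊N * m⌋₊ : ℝ) ≠ 0 := Nat.cast_ne_zero.2 (Nat.choose_pos hfloor_le).ne'
  have : 1 - m ≠ 0 := (sub_pos.2 hm1).ne'
  rw [Real.log_mul hchoose (by positivity), Real.log_mul (by positivity) (by positivity),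
    Real.log_pow, Real.log_pow, Nat.cast_sub hfloor_le]
  field_simp

lemma probTASEP_halfSpace_le (hm0 : 0 < m) (hm1 : m < 1) (φ : Circle' →ᵇ ℝ) (a : ℝ) {N : ℕ}
    (hN : N ≠ 0) :
    probTASEP m N {μ | a < ∫ u, φ u ∂(μ : Measure Circle')} ≤ ENNReal.ofReal (Real.exp
      (N * ((N : ℝ)⁻¹ * ∑ i ∈ Finset.range N, bernoulliCGF m (φ ((i / N : ℝ) : Circle')) - a
        - Real.log (N.choose ⌊N * m⌋₊ * (m ^ ⌊N * m⌋₊ * (1 - m) ^ (N - ⌊N * m⌋₊))) / N))) := by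
  have : NeZero N := ⟨hN⟩
  have hN' : (0 : ℝ) < N := by positivity
  have : 0 < 1 - m := sub_pos.2 hm1
  have hchoose : (0 : ℝ) < N.choose ⌊N * m⌋₊ :=
    Nat.cast_pos.2 (Nat.choose_pos (nat_floor_natCast_mul_le hm1.le N))
  rw [probTASEP_eq_ofReal hm1.le]
  refine ENNReal.ofReal_le_ofReal ?_
  set configs := {S : Finset (ZMod N) | S.card = ⌊N * m⌋₊ ∧
    empTASEP N S ∈ {μ : FiniteMeasure Circle' | a < ∫ u, φ u ∂(μ : Measure Circle')}}
  have hcheb := card_mul_le_exp_sum_bernoulliCGF hm0 hm1 (g := fun x ↦ φ (site N x)) (b := N * a)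
    (K := ⌊N * m⌋₊) (A := (toFinite configs).toFinset) fun S hS ↦ by
      obtain ⟨hcard, hS⟩ := (toFinite configs).mem_toFinset.1 hS
      have hmean : a < ∫ u, φ u ∂(empTASEP N S : Measure Circle') := hS
      rw [integral_empTASEP, lt_inv_mul_iff₀ hN'] at hmean
      exact ⟨hcard, hmean.le⟩
  have hsum : ∑ x : ZMod N, bernoulliCGF m (φ (site N x))
      = ∑ i ∈ Finset.range N, bernoulliCGF m (φ ((i / N : ℝ) : Circle')) :=
    sum_zmod_val N fun i ↦ bernoulliCGF m (φ ((i / N : ℝ) : Circle'))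
  rw [← ncard_eq_toFinset_card, ZMod.card, hsum] at hcheb
  rw [mul_sub, mul_sub, mul_inv_cancel_left₀ hN'.ne', mul_div_cancel₀ _ hN'.ne', Real.exp_sub,
    Real.exp_sub, Real.exp_log (by positivity), div_div, div_le_div_iff₀ hchoose (by positivity)]
  calc _ = configs.ncard * (m ^ ⌊N * m⌋₊ * (1 - m) ^ (N - ⌊N * m⌋₊) * Real.exp (N * a))
        * N.choose ⌊N * m⌋₊ := by ring
    _ ≤ _ := by gcongr

lemma expGrowthSup_halfSpace_le (hm0 : 0 < m) (hm1 : m < 1) (φ : Circle' →ᵇ ℝ) (a : ℝ) :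
    ExpGrowth.expGrowthSup (fun N ↦ probTASEP m N {μ | a < ∫ u, φ u ∂(μ : Measure Circle')})
      ≤ (((∫ u, bernoulliCGF m (φ u)) - a : ℝ) : EReal) := by
  refine expGrowthSup_le_of_tendsto (eventually_ne_atTop 0 |>.mono fun N hN ↦
    probTASEP_halfSpace_le hm0 hm1 φ a hN) ?_
  simpa only [sub_zero, BoundedContinuousFunction.comp_apply] using
    ((tendsto_riemannSum (φ.comp _ (lipschitzWith_bernoulliCGF hm0 hm1))).sub_const a).sub
      (tendsto_log_choose_mul_pow_div hm0 hm1)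

lemma exists_mem_nhds_expGrowthSup_le_of_lt_dualFunctional (hm0 : 0 < m) (hm1 : m < 1) {α : ℝ}
    {φ : Circle' →ᵇ ℝ} (hφ : α < dualFunctional m volume (ρ : Measure Circle') φ) :
    ∃ U ∈ 𝓝 ρ, ExpGrowth.expGrowthSup (fun N ↦ probTASEP m N U) ≤ ((-α : ℝ) : EReal) := by
  refine ⟨{μ | (∫ u, bernoulliCGF m (φ u)) + α < ∫ u, φ u ∂(μ : Measure Circle')}, ?_, ?_⟩
  · exact (isOpen_lt continuous_const
      (FiniteMeasure.continuous_integral_boundedContinuousFunction φ)).mem_nhds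
        (lt_sub_iff_add_lt'.1 hφ)
  · simpa only [sub_add_cancel_left] using
      expGrowthSup_halfSpace_le hm0 hm1 φ ((∫ u, bernoulliCGF m (φ u)) + α)

lemma exists_mem_nhds_expGrowthSup_eq_bot (hm0 : 0 ≤ m) (hρ : (ρ.mass : ℝ) ≠ m) :
    ∃ U ∈ 𝓝 ρ, ExpGrowth.expGrowthSup (fun N ↦ probTASEP m N U) = ⊥ := by
  obtain ⟨V, W, hV, hW, hdisj⟩ := t2_separation_nhds hρ
  refine ⟨{μ | (μ.mass : ℝ) ∈ V},
    (NNReal.continuous_coe.comp FiniteMeasure.continuous_mass).continuousAt hV, ?_⟩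
  rw [← ExpGrowth.expGrowthSup_zero]
  refine ExpGrowth.expGrowthSup_congr ?_
  filter_upwards [(tendsto_nat_floor_natCast_mul_div hm0).eventually hW, eventually_ne_atTop 0]
    with N hNW hN
  refine le_bot_iff.1 ((probTASEP_mono_of_card hN fun S hS hSV ↦ ?_).trans_eq probTASEP_empty)
  have hSW : ((empTASEP N S).mass : ℝ) ∈ W := by rwa [mass_empTASEP, hS]
  exact disjoint_left.1 hdisj hSV hSW

open Classical in
lemma rateTASEP_eq_ite_le (m : ℝ) (ρ : FiniteMeasure Circle') :
    rateTASEP m ρ =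
      if (ρ : Measure Circle') ≤ volume ∧ (ρ : Measure Circle') univ = ENNReal.ofReal m
      then ENNReal.ofReal (∫ u, hFun m ((ρ : Measure Circle').rnDeriv volume u).toReal)
      else ⊤ := by
  refine if_congr ?_ rfl rfl
  rw [← and_assoc]
  refine and_congr_left' ⟨fun ⟨hac, hle⟩ ↦ (Measure.rnDeriv_le_one_iff_le hac).1 ?_,
    fun hle ↦ ⟨hle.absolutelyContinuous, ?_⟩⟩
  · filter_upwards [hle, Measure.rnDeriv_ne_top (ρ : Measure Circle') volume] with u hu hutop
    rwa [Pi.one_apply, ← ENNReal.ofReal_toReal hutop, ENNReal.ofReal_le_one]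
  · exact (ae_toReal_rnDeriv_mem_Icc_of_le hle).mono fun u hu ↦ hu.2

lemma exists_lt_dualFunctional_of_lt_rateTASEP (hm0 : 0 < m) (hm1 : m < 1)
    (hρ : (ρ : Measure Circle') univ = ENNReal.ofReal m) {α : ℝ}
    (hα : (α : EReal) < rateTASEP m ρ) :
    ∃ φ : Circle' →ᵇ ℝ, α < dualFunctional m volume (ρ : Measure Circle') φ := by
  by_cases hle : (ρ : Measure Circle') ≤ volume
  · rw [rateTASEP_eq_ite_le, if_pos ⟨hle, hρ⟩, EReal.coe_ennreal_ofReal, EReal.coe_lt_coe_iff,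
      lt_max_iff] at hα
    rcases hα with hα | hα
    · exact exists_lt_dualFunctional_of_le hm0 hm1 hle hα
    · exact ⟨0, by simpa [dualFunctional, bernoulliCGF] using hα⟩
  · exact exists_lt_dualFunctional_of_not_le hm0 hm1 hle α

lemma exists_mem_nhds_expGrowthSup_le_of_lt_rateTASEP (hm0 : 0 < m) (hm1 : m < 1) {α : ℝ}
    (hα : (α : EReal) < rateTASEP m ρ) :
    ∃ U ∈ 𝓝 ρ, ExpGrowth.expGrowthSup (fun N ↦ probTASEP m N U) ≤ ((-α : ℝ) : EReal) := by
  by_cases hρ : (ρ.mass : ℝ) = m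
  · obtain ⟨φ, hφ⟩ := exists_lt_dualFunctional_of_lt_rateTASEP hm0 hm1
      (by rw [← hρ, ENNReal.ofReal_coe_nnreal, FiniteMeasure.ennreal_mass]) hα
    exact exists_mem_nhds_expGrowthSup_le_of_lt_dualFunctional hm0 hm1 hφ
  · obtain ⟨U, hU, hbot⟩ := exists_mem_nhds_expGrowthSup_eq_bot hm0.le hρ
    exact ⟨U, hU, hbot.trans_le bot_le⟩

lemma mass_empTASEP_le_one {N : ℕ} (hN : N ≠ 0) (S : Finset (ZMod N)) :
    (empTASEP N S).mass ≤ 1 := by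
  have : NeZero N := ⟨hN⟩
  have hcard : (S.card : ℝ) ≤ N := by exact_mod_cast S.card_le_univ.trans_eq (ZMod.card N)
  exact_mod_cast (mass_empTASEP N S).trans_le (div_le_one_of_le₀ hcard N.cast_nonneg)

lemma expGrowthSup_probTASEP_le {C : Set (FiniteMeasure Circle')} (hm0 : 0 < m) (hm1 : m < 1)
    (hC : IsClosed C) {α : ℝ} (hα : ∀ ρ ∈ C, (α : EReal) < rateTASEP m ρ) :
    ExpGrowth.expGrowthSup (fun N ↦ probTASEP m N C) ≤ ((-α : ℝ) : EReal) := by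
  have hcompact : IsCompact (C ∩ {μ : FiniteMeasure Circle' | μ.mass ≤ 1}) :=
    (isCompact_setOfPred_finiteMeasure_le_of_compactSpace Circle' 1).inter_left hC
  have hmono {D E : Set (FiniteMeasure Circle')}
      (hDE : ∀ N ≠ 0, ∀ S : Finset (ZMod N), empTASEP N S ∈ D → empTASEP N S ∈ E) :
      ExpGrowth.expGrowthSup (fun N ↦ probTASEP m N D)
        ≤ ExpGrowth.expGrowthSup fun N ↦ probTASEP m N E :=
    ExpGrowth.expGrowthSup_eventually_monotone <| (eventually_ne_atTop 0).mono fun N hN ↦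
      probTASEP_mono_of_card hN fun S _ ↦ hDE N hN S
  refine (hmono (E := C ∩ {μ | μ.mass ≤ 1}) fun N hN S hS ↦
    ⟨hS, mass_empTASEP_le_one hN S⟩).trans ?_
  refine hcompact.induction_on
    (p := fun D ↦ ExpGrowth.expGrowthSup (fun N ↦ probTASEP m N D) ≤ ((-α : ℝ) : EReal)) ?_
    (fun D E hDE hE ↦ (hmono fun _ _ _ hS ↦ hDE hS).trans hE) (fun D E hD hE ↦ ?_) fun ρ hρ ↦ ?_
  · simp only [probTASEP_empty]
    exact ExpGrowth.expGrowthSup_zero.trans_le bot_le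
  · exact (ExpGrowth.expGrowthSup_monotone fun N ↦ probTASEP_union_le).trans
      (ExpGrowth.expGrowthSup_add.trans_le (sup_le hD hE))
  · obtain ⟨U, hU, hgrowth⟩ := exists_mem_nhds_expGrowthSup_le_of_lt_rateTASEP hm0 hm1 (hα ρ hρ.1)
    exact ⟨U, mem_nhdsWithin_of_mem_nhds hU, hgrowth⟩

theorem expGrowthSup_probTASEP_le_neg_iInf {C : Set (FiniteMeasure Circle')} (hm0 : 0 < m)
    (hm1 : m < 1) (hC : IsClosed C) :
    ExpGrowth.expGrowthSup (fun N ↦ probTASEP m N C) ≤ -⨅ ρ ∈ C, (rateTASEP m ρ : EReal) := by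
  rw [EReal.le_neg]
  refine EReal.ge_of_forall_gt_iff_ge.1 fun α hα ↦ ?_
  rw [EReal.le_neg]
  exact expGrowthSup_probTASEP_le hm0 hm1 hC fun ρ hρ ↦ hα.trans_le (iInf₂_le ρ hρ)

end UpperBound

/-! ### Configurations with prescribed cell counts -/

lemma prod_choose_le_ncard {ι α : Type*} [Fintype ι] [Finite α] [DecidableEq α] {B : ι → Finset α}
    (hB : Pairwise (Function.onFun Disjoint B)) (n : ι → ℕ) :
    ∏ j, (B j).card.choose (n j)
      ≤ {S : Finset α | S.card = ∑ j, n j ∧ ∀ j, (S ∩ B j).card = n j}.ncard := by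
  classical
  set choices := Fintype.piFinset fun j ↦ Finset.powersetCard (n j) (B j)
  have hmem {g : ι → Finset α} (hg : g ∈ choices) (j : ι) : g j ⊆ B j ∧ (g j).card = n j :=
    Finset.mem_powersetCard.1 (Fintype.mem_piFinset.1 hg j)
  have hinter {g : ι → Finset α} (hg : g ∈ choices) (j : ι) :
      Finset.univ.biUnion g ∩ B j = g j := by
    ext x
    simp only [Finset.mem_inter, Finset.mem_biUnion, Finset.mem_univ, true_and]
    refine ⟨fun ⟨⟨i, hi⟩, hx⟩ ↦ ?_, fun hx ↦ ⟨⟨j, hx⟩, (hmem hg j).1 hx⟩⟩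
    obtain rfl : i = j := by
      by_contra hij
      exact Finset.disjoint_left.1 (hB hij) ((hmem hg i).1 hi) hx
    exact hi
  have hchoices : choices.card = ∏ j, (B j).card.choose (n j) := by
    simp only [choices, Fintype.card_piFinset, Finset.card_powersetCard]
  rw [← hchoices, ← ncard_coe_finset]
  refine ncard_le_ncard_of_injOn (fun g ↦ Finset.univ.biUnion g) (fun g hg ↦ ⟨?_, fun j ↦ ?_⟩)
    (fun g hg g' hg' h ↦ funext fun j ↦ ?_) (toFinite _)
  · rw [Finset.card_biUnion fun i _ j _ hij ↦ (hB hij).mono (hmem hg i).1 (hmem hg j).1]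
    exact Finset.sum_congr rfl fun j _ ↦ (hmem hg j).2
  · rw [hinter hg j, (hmem hg j).2]
  · rw [← hinter hg j, ← hinter hg' j]
    exact congrArg (· ∩ B j) h

lemma pairwise_disjoint_cellSites {N k : ℕ} [NeZero N] (hk : k ≠ 0) :
    Pairwise (Function.onFun Disjoint fun j : Fin k ↦ cellSites N k j) := fun i j hij ↦ by
  classical
  refine Finset.disjoint_left.2 fun x hxi hxj ↦ ?_
  exact disjoint_left.1 (pairwise_disjoint_cell_fin hk hij) (Finset.mem_filter.1 hxi).2
    (Finset.mem_filter.1 hxj).2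

/-- The distribution function of a measure on the circle, read on the fundamental domain
`[0, 1)`. -/
def coordCDF (ρ : Measure Circle') (t : ℝ) : ℝ := ρ.real (coord ⁻¹' Iio t)

section CoordCDF

variable {ρ : Measure Circle'}

lemma coordCDF_nonneg (t : ℝ) : 0 ≤ coordCDF ρ t := measureReal_nonneg

lemma coordCDF_zero : coordCDF ρ 0 = 0 := by
  have hempty : coord ⁻¹' Iio 0 = ∅ :=
    eq_empty_of_forall_notMem fun u hu ↦ (coord_mem_Ico u).1.not_gt hu
  rw [coordCDF, hempty, measureReal_empty]

lemma coordCDF_one : coordCDF ρ 1 = ρ.real univ :=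
  congrArg ρ.real (eq_univ_of_forall fun u ↦ (coord_mem_Ico u).2)

variable [IsFiniteMeasure ρ]

lemma coordCDF_sub {s t : ℝ} (hst : s ≤ t) : coordCDF ρ t - coordCDF ρ s = ρ.real (arc s t) := by
  rw [coordCDF, coordCDF, arc, ← Ici_inter_Iio, inter_comm, ← compl_Iio, ← sdiff_eq, preimage_sdiff,
    measureReal_sdiff (preimage_mono (Iio_subset_Iio hst)) (measurable_coord measurableSet_Iio)]

lemma coordCDF_mono : Monotone (coordCDF ρ) := fun _ _ hst ↦
  measureReal_mono (preimage_mono (Iio_subset_Iio hst))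

end CoordCDF

lemma coordCDF_le_add_of_le {ρ : Measure Circle'} (hle : ρ ≤ volume) {s t : ℝ} (hst : s ≤ t) :
    coordCDF ρ t ≤ coordCDF ρ s + (t - s) := by
  have := isFiniteMeasure_of_le volume hle
  rw [← sub_le_iff_le_add', coordCDF_sub hst]
  refine ENNReal.toReal_le_of_le_ofReal (sub_nonneg.2 hst) ((hle _).trans ?_)
  rw [volume_arc]
  gcongr
  exacts [min_le_left _ _, le_max_left _ _]

lemma continuous_coordCDF {ρ : Measure Circle'} (hle : ρ ≤ volume) : Continuous (coordCDF ρ) :=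
  (LipschitzWith.of_le_add fun s t ↦ by
    have := isFiniteMeasure_of_le volume hle
    rcases le_total s t with hst | hts
    · exact (coordCDF_mono hst).trans (le_add_of_nonneg_right dist_nonneg)
    · exact (coordCDF_le_add_of_le hle hts).trans_eq
        (by rw [Real.dist_eq, abs_of_nonneg (sub_nonneg.2 hts)])).continuous

/-- The number of particles to be put on the sites of the first `j` cells in order to follow the
distribution function of `ρ`. The distribution function is read at the sites delimiting the cells
rather than at the points `j / k`, so that no cell is asked to hold more particles than it has
sites. -/
def cumCount (ρ : Measure Circle') (N k j : ℕ) : ℕ :=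
  ⌊N * coordCDF ρ (cellBoundary N k j / N)⌋₊

/-- The number of particles to be put in the `j`-th cell in order to approximate `ρ`. -/
def cellCount (ρ : Measure Circle') (N k j : ℕ) : ℕ := cumCount ρ N k (j + 1) - cumCount ρ N k j

section CellCount

variable {ρ : Measure Circle'} {N k : ℕ}

lemma cumCount_mono [IsFiniteMeasure ρ] : Monotone (cumCount ρ N k) := fun i j hij ↦ by
  have hF := coordCDF_mono (ρ := ρ) (div_le_div_of_nonneg_right
    (Nat.cast_le.2 (cellBoundary_mono N k hij)) (N.cast_nonneg (α := ℝ)))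
  unfold cumCount
  gcongr

lemma cellCount_le (hle : ρ ≤ volume) (j : ℕ) :
    cellCount ρ N k j ≤ cellBoundary N k (j + 1) - cellBoundary N k j := by
  rcases eq_or_ne N 0 with rfl | hN
  · simp [cellCount, cumCount]
  have hb := cellBoundary_mono N k j.le_succ
  have hb' : (cellBoundary N k j : ℝ) / N ≤ cellBoundary N k (j + 1) / N := by gcongr
  have hF := mul_le_mul_of_nonneg_left (coordCDF_le_add_of_le hle hb') (N.cast_nonneg (α := ℝ))
  rw [mul_add, ← sub_div, mul_div_cancel₀ _ (by positivity), ← Nat.cast_sub hb] at hF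
  refine Nat.sub_le_iff_le_add'.2 ((Nat.floor_le_floor hF).trans_eq ?_)
  exact Nat.floor_add_natCast (mul_nonneg N.cast_nonneg (coordCDF_nonneg _)) _

lemma sum_cellCount [IsFiniteMeasure ρ] (hN : N ≠ 0) (hk : k ≠ 0) :
    ∑ j : Fin k, cellCount ρ N k j = ⌊N * ρ.real univ⌋₊ := by
  rw [Fin.sum_univ_eq_sum_range (cellCount ρ N k) k]
  simp only [cellCount]
  rw [Finset.sum_range_tsub cumCount_mono, cumCount, cumCount, cellBoundary_self N hk,
    cellBoundary_zero, div_self (Nat.cast_ne_zero.2 hN), Nat.cast_zero, zero_div, coordCDF_one,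
    coordCDF_zero, mul_zero, Nat.floor_zero, Nat.sub_zero]

lemma tendsto_cumCount_div (hle : ρ ≤ volume) (k j : ℕ) :
    Tendsto (fun N ↦ (cumCount ρ N k j : ℝ) / N) atTop (𝓝 (coordCDF ρ (j / k))) := by
  have hF : Tendsto (fun N : ℕ ↦ coordCDF ρ (cellBoundary N k j / N)) atTop
      (𝓝 (coordCDF ρ (j / k))) :=
    ((continuous_coordCDF hle).tendsto _).comp (tendsto_cellBoundary_div k j)
  have hlower : Tendsto (fun N : ℕ ↦ coordCDF ρ (cellBoundary N k j / N) - (N : ℝ)⁻¹) atTop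
      (𝓝 (coordCDF ρ (j / k))) := by
    simpa only [sub_zero] using hF.sub tendsto_inv_atTop_nhds_zero_nat
  refine tendsto_of_tendsto_of_tendsto_of_le_of_le' hlower hF ?_ ?_ <;>
    filter_upwards [eventually_ne_atTop 0] with N hN
  · have hN' : (0 : ℝ) < N := by positivity
    rw [le_div_iff₀' hN', mul_sub, mul_inv_cancel₀ hN'.ne']
    exact (Nat.sub_one_lt_floor _).le
  · have hN' : (0 : ℝ) < N := by positivity
    rw [div_le_iff₀' hN']
    exact Nat.floor_le (mul_nonneg hN'.le (coordCDF_nonneg _))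

lemma tendsto_cellCount_div (hle : ρ ≤ volume) (k j : ℕ) :
    Tendsto (fun N ↦ (cellCount ρ N k j : ℝ) / N) atTop (𝓝 (ρ.real (cell k j))) := by
  have := isFiniteMeasure_of_le volume hle
  rw [cell, ← coordCDF_sub (div_le_succ_div k j)]
  refine ((tendsto_cumCount_div hle k (j + 1)).sub (tendsto_cumCount_div hle k j)).congr fun N ↦ ?_
  rw [cellCount, Nat.cast_sub (cumCount_mono j.le_succ), sub_div]

end CellCount

/-! ### The lower bound -/

section Jensen

variable {X : Type*} [MeasurableSpace X] {ρ μ : Measure X}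

lemma integrable_binEntropy_rnDeriv [IsFiniteMeasure μ] (hle : ρ ≤ μ) :
    Integrable (fun u ↦ Real.binEntropy (ρ.rnDeriv μ u).toReal) μ :=
  integrable_comp_of_ae_mem_Icc (Measure.measurable_rnDeriv ρ μ).ennreal_toReal.aemeasurable
    (ae_toReal_rnDeriv_mem_Icc_of_le hle) Real.binEntropy_continuous

lemma setIntegral_binEntropy_rnDeriv_le [IsFiniteMeasure μ] (hle : ρ ≤ μ) {A : Set X}
    (hA : μ A ≠ 0) :
    ∫ u in A, Real.binEntropy (ρ.rnDeriv μ u).toReal ∂μ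
      ≤ μ.real A * Real.binEntropy (ρ.real A / μ.real A) := by
  have := isFiniteMeasure_of_le μ hle
  have hpos : 0 < μ.real A := ENNReal.toReal_pos hA (measure_ne_top _ _)
  have havg := Real.strictConcave_binEntropy.concaveOn.le_map_set_average
    Real.binEntropy_continuous.continuousOn isClosed_Icc hA (measure_ne_top _ _)
    (ae_restrict_of_ae (ae_toReal_rnDeriv_mem_Icc_of_le hle))
    Measure.integrable_toReal_rnDeriv.integrableOn
    (integrable_binEntropy_rnDeriv hle).integrableOn
  rwa [setAverage_eq, setAverage_eq, Measure.setIntegral_toReal_rnDeriv hle.absolutelyContinuous,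
    smul_eq_mul, smul_eq_mul, inv_mul_le_iff₀ hpos, ← div_eq_inv_mul] at havg

lemma integral_hFun_rnDeriv [IsProbabilityMeasure μ] (hle : ρ ≤ μ) {m : ℝ} (hm0 : 0 < m)
    (hm1 : m < 1) (hρ : ρ.real univ = m) :
    ∫ u, hFun m (ρ.rnDeriv μ u).toReal ∂μ
      = Real.binEntropy m - ∫ u, Real.binEntropy (ρ.rnDeriv μ u).toReal ∂μ := by
  have := isFiniteMeasure_of_le μ hle
  have hf : Integrable (fun u ↦ (ρ.rnDeriv μ u).toReal) μ := Measure.integrable_toReal_rnDeriv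
  have hH := integrable_binEntropy_rnDeriv hle
  have hmean : ∫ u, (ρ.rnDeriv μ u).toReal ∂μ = m := by
    rw [Measure.integral_toReal_rnDeriv hle.absolutelyContinuous, hρ]
  simp only [hFun_eq_neg_binEntropy_sub hm0 hm1]
  rw [integral_sub, integral_sub hH.fun_neg (hf.mul_const _), integral_neg, integral_mul_const,
    integral_mul_const, integral_sub (integrable_const _) hf, hmean, integral_const, probReal_univ,
    one_smul, Real.binEntropy, Real.log_inv, Real.log_inv]
  · ring
  · exact hH.neg.sub (hf.mul_const _)
  · exact ((integrable_const _).sub hf).mul_const _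

end Jensen

section LowerBound

variable {m : ℝ} {ρ : FiniteMeasure Circle'} {k : ℕ}

lemma eventually_empTASEP_mem_cellNhd (hle : (ρ : Measure Circle') ≤ volume) (hk : k ≠ 0) :
    ∀ᶠ N : ℕ in atTop, ∀ [NeZero N], ∀ S : Finset (ZMod N),
      (∀ j : Fin k, (S ∩ cellSites N k j).card = cellCount ρ N k j) →
        empTASEP N S ∈ cellNhd ρ k := by
  have hsum : Tendsto (fun N : ℕ ↦ ∑ j : Fin k, |(cellCount ρ N k j : ℝ) / N
      - (ρ : Measure Circle').real (cell k j)|) atTop (𝓝 0) := by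
    simpa using tendsto_finsetSum Finset.univ fun (j : Fin k) _ ↦
      ((tendsto_cellCount_div hle k j).sub_const ((ρ : Measure Circle').real (cell k j))).abs
  have hk' : (0 : ℝ) < 1 / k := by positivity
  filter_upwards [hsum.eventually (gt_mem_nhds hk')] with N hN _ S hS
  simpa only [cellNhd, mem_ofPred_eq, real_cell_empTASEP, hS] using hN.le

lemma ofReal_prod_choose_div_le_probTASEP (hm1 : m ≤ 1)
    (hρ : (ρ : Measure Circle').real univ = m) (hk : k ≠ 0) {O : Set (FiniteMeasure Circle')}
    {N : ℕ} [NeZero N]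
    (hO : ∀ S : Finset (ZMod N),
      (∀ j : Fin k, (S ∩ cellSites N k j).card = cellCount ρ N k j) → empTASEP N S ∈ O) :
    ENNReal.ofReal ((∏ j : Fin k, (cellBoundary N k (j + 1) - cellBoundary N k j).choose
        (cellCount ρ N k j) : ℕ) / N.choose ⌊N * m⌋₊) ≤ probTASEP m N O := by
  have hcount := prod_choose_le_ncard (pairwise_disjoint_cellSites (N := N) hk)
    fun j ↦ cellCount ρ N k j
  simp only [card_cellSites (Fin.is_lt _), sum_cellCount (NeZero.ne N) hk, hρ] at hcount
  rw [probTASEP_eq_ofReal hm1]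
  refine ENNReal.ofReal_le_ofReal (div_le_div_of_nonneg_right (Nat.cast_le.2
    (hcount.trans (ncard_le_ncard ?_ (toFinite _)))) (Nat.cast_nonneg _))
  exact fun S hS ↦ ⟨hS.1, hO S hS.2⟩

lemma sum_binEntropy_sub_le_expGrowthInf (hle : (ρ : Measure Circle') ≤ volume) (hm1 : m ≤ 1)
    (hρ : (ρ : Measure Circle').real univ = m) (hk : k ≠ 0) {O : Set (FiniteMeasure Circle')}
    (hO : cellNhd ρ k ⊆ O) :
    ((∑ j : Fin k, 1 / k * Real.binEntropy ((ρ : Measure Circle').real (cell k j) / (1 / k))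
      - Real.binEntropy m : ℝ) : EReal) ≤ ExpGrowth.expGrowthInf fun N ↦ probTASEP m N O := by
  have hm0 : 0 ≤ m := hρ ▸ measureReal_nonneg
  have hcell : 0 < 1 / (k : ℝ) := by positivity
  refine le_expGrowthInf_of_tendsto ?_ ((tendsto_finsetSum Finset.univ fun (j : Fin k) _ ↦
    tendsto_log_choose_div hcell (fun N ↦ cellCount_le hle j)
      (tendsto_card_cellBoundary_sub_div k j) (tendsto_cellCount_div hle k j)).sub
        (tendsto_log_choose_floor_div hm0 hm1))
  filter_upwards [eventually_empTASEP_mem_cellNhd hle hk, eventually_ne_atTop 0] with N hmem hN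
  have : NeZero N := ⟨hN⟩
  have hchoose : (0 : ℝ) < N.choose ⌊N * m⌋₊ :=
    Nat.cast_pos.2 (Nat.choose_pos (nat_floor_natCast_mul_le hm1 N))
  have hcell_choose (j : Fin k) : (0 : ℝ) < (cellBoundary N k (j + 1) - cellBoundary N k j).choose
      (cellCount ρ N k j) := Nat.cast_pos.2 (Nat.choose_pos (cellCount_le hle j))
  refine le_of_eq_of_le (congrArg _ ?_)
    (ofReal_prod_choose_div_le_probTASEP hm1 hρ hk fun S hS ↦ hO (hmem S hS))
  rw [← Finset.sum_div, ← sub_div, mul_div_cancel₀ _ (by positivity), Real.exp_sub,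
    Real.exp_log hchoose, Real.exp_sum, Nat.cast_prod]
  simp only [Real.exp_log (hcell_choose _)]

lemma neg_integral_hFun_le_sum_binEntropy_sub (hle : (ρ : Measure Circle') ≤ volume) (hm0 : 0 < m)
    (hm1 : m < 1) (hρ : (ρ : Measure Circle').real univ = m) (hk : k ≠ 0) :
    -∫ u, hFun m ((ρ : Measure Circle').rnDeriv volume u).toReal
      ≤ ∑ j : Fin k, 1 / k * Real.binEntropy ((ρ : Measure Circle').real (cell k j) / (1 / k))
        - Real.binEntropy m := by
  have hcells : ∑ j : Fin k, ∫ u in cell k j,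
      Real.binEntropy ((ρ : Measure Circle').rnDeriv volume u).toReal
        = ∫ u, Real.binEntropy ((ρ : Measure Circle').rnDeriv volume u).toReal := by
    rw [← integral_iUnion_fintype (fun j : Fin k ↦ measurableSet_cell k j)
      (pairwise_disjoint_cell_fin hk) fun _ ↦ (integrable_binEntropy_rnDeriv hle).integrableOn,
      iUnion_cell hk, Measure.restrict_univ]
  rw [integral_hFun_rnDeriv hle hm0 hm1 hρ, neg_sub, ← hcells]
  refine sub_le_sub_right (Finset.sum_le_sum fun j _ ↦ ?_) _
  have hcell : volume.real (cell k j) ≠ 0 := by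
    rw [volume_real_cell]
    positivity
  simpa only [volume_real_cell] using
    setIntegral_binEntropy_rnDeriv_le hle ((measureReal_ne_zero_iff).1 hcell)

theorem neg_iInf_le_expGrowthInf_probTASEP {O : Set (FiniteMeasure Circle')} (hm0 : 0 < m)
    (hm1 : m < 1) (hO : IsOpen O) :
    -⨅ ρ ∈ O, (rateTASEP m ρ : EReal) ≤ ExpGrowth.expGrowthInf fun N ↦ probTASEP m N O := by
  classical
  rw [EReal.neg_le]
  refine le_iInf₂ fun ρ hρO ↦ ?_
  rw [EReal.neg_le, rateTASEP_eq_ite_le]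
  split_ifs with h
  · obtain ⟨k, hk, hkO⟩ := exists_cellNhd_subset (hO.mem_nhds hρO)
    have hρ : (ρ : Measure Circle').real univ = m := by
      rw [measureReal_def, h.2, ENNReal.toReal_ofReal hm0.le]
    rw [EReal.coe_ennreal_ofReal, ← EReal.coe_neg]
    refine (EReal.coe_le_coe_iff.2 ((neg_le_neg (le_max_left _ _)).trans
      (neg_integral_hFun_le_sum_binEntropy_sub h.1 hm0 hm1 hρ hk))).trans ?_
    exact sum_binEntropy_sub_le_expGrowthInf h.1 hm1.le hρ hk hkO
  · simp

end LowerBound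

lemma inv_mul_log_eq_log_div (u : ℕ → ℝ≥0∞) :
    (fun N : ℕ ↦ (((N : ℝ)⁻¹ : ℝ) : EReal) * ENNReal.log (u N))
      = fun N : ℕ ↦ ENNReal.log (u N) / N := by
  funext N
  rw [EReal.div_eq_inv_mul, EReal.coe_inv, EReal.coe_natCast]

/-- LDP for the empirical measures of the invariant measures (uniform
measures) of the one-class TASEP with `⌊Nm⌋` particles, with speed `N` and rate
functional `S₁(ρ) = ∫ h_m(dρ/dLeb)` (and `+∞` off the absolutely continuous measures
of mass `m` with density in `[0,1]`). -/
theorem stmt11 (m : ℝ) (hm0 : 0 < m) (hm1 : m < 1) :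
    (∀ C : Set (FiniteMeasure Circle'), IsClosed C →
      Filter.limsup
        (fun N : ℕ => (((N : ℝ)⁻¹ : ℝ) : EReal) * ENNReal.log (probTASEP m N C))
        Filter.atTop
        ≤ - ⨅ ρ ∈ C, (rateTASEP m ρ : EReal)) ∧
    (∀ O : Set (FiniteMeasure Circle'), IsOpen O →
      - ⨅ ρ ∈ O, (rateTASEP m ρ : EReal)
        ≤ Filter.liminf
            (fun N : ℕ => (((N : ℝ)⁻¹ : ℝ) : EReal) * ENNReal.log (probTASEP m N O))
            Filter.atTop) := by
  refine ⟨fun C hC ↦ ?_, fun O hO ↦ ?_⟩ <;> rw [inv_mul_log_eq_log_div]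
  · exact expGrowthSup_probTASEP_le_neg_iInf hm0 hm1 hC
  · exact neg_iInf_le_expGrowthInf_probTASEP hm0 hm1 hO

end
end

section
/- Let m ∈ (0,1), L > 0, and let g : [0,L] → [0,1] be measurable. Set F(u) := ∫_0^u g(w) dw and let F̂ be the least concave majorant of F on [0,L]; let ĝ : [0,L] → [0,1] be a measurable function with ∫_0^u ĝ(w) dw = F̂(u) for all u ∈ [0,L]. Then ĝ is a minimizer of the variational problem: for every measurable φ : [0,L] → [0,1] satisfying ∫_0^u φ(w) dw ≥ F(u) for all u ∈ [0,L] and ∫_0^L φ(w) dw = F(L), one has ∫_0^L h_m(φ(u)) du ≥ ∫_0^L h_m(ĝ(u)) du; moreover ĝ itself satisfies these constraints, so the infimum of ∫_0^L h_m(φ) over the constraint set equals ∫_0^L h_m(ĝ). -/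
open MeasureTheory Set

noncomputable section

/-- The least concave majorant of `F` on `[0,L]`: the pointwise infimum of all concave
functions on `[0,L]` dominating `F` there. -/
noncomputable def lcMaj (L : ℝ) (F : ℝ → ℝ) (u : ℝ) : ℝ :=
  sInf {y : ℝ | ∃ G : ℝ → ℝ,
    ConcaveOn ℝ (Set.Icc 0 L) G ∧ (∀ x ∈ Set.Icc 0 L, F x ≤ G x) ∧ y = G u}

/-!
For each level `c`, the affine function `u ↦ c u + ∫₀ᴸ (φ - c)⁺` dominates the primitive of a
competitor `φ`, hence `F`, hence `F̂`. Since `F̂` is concave, `ĝ - c` is nonnegative up to some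
point `s` and nonpositive after it, so evaluating at `s` gives
`∫ (ĝ - c)⁺ = F̂(s) - c s ≤ ∫ (φ - c)⁺`. As `ĝ` and `φ` have the same integral, comparing all these
hinge integrals yields `∫ ψ(ĝ) ≤ ∫ ψ(φ)` for every continuous convex `ψ`: a piecewise linear
interpolant of `ψ` is an affine function plus a nonnegative combination of hinges. Finally, `h_m`
is an affine function minus the binary entropy.
-/

theorem concaveOn_affine (p q : ℝ) {s : Set ℝ} (hs : Convex ℝ s) :
    ConcaveOn ℝ s fun x ↦ p * x + q := by
  refine ⟨hs, fun x _ y _ α β _ _ hαβ ↦ le_of_eq ?_⟩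
  simp only [smul_eq_mul]
  linear_combination q * hαβ

section LeastConcaveMajorant

variable {L : ℝ} {F G : ℝ → ℝ} {u : ℝ}

theorem lcMaj_le (hG : ConcaveOn ℝ (Icc 0 L) G) (hFG : ∀ x ∈ Icc 0 L, F x ≤ G x)
    (hu : u ∈ Icc 0 L) : lcMaj L F u ≤ G u := by
  refine csInf_le ⟨F u, ?_⟩ ⟨G, hG, hFG, rfl⟩
  rintro _ ⟨G', -, hFG', rfl⟩
  exact hFG' u hu

theorem le_lcMaj_of_forall (hF : BddAbove (F '' Icc 0 L)) {y : ℝ}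
    (hy : ∀ G : ℝ → ℝ, ConcaveOn ℝ (Icc 0 L) G → (∀ x ∈ Icc 0 L, F x ≤ G x) → y ≤ G u) :
    y ≤ lcMaj L F u := by
  obtain ⟨C, hC⟩ := hF
  refine le_csInf ⟨C, fun _ ↦ C, concaveOn_const C (convex_Icc 0 L),
    fun x hx ↦ hC (mem_image_of_mem F hx), rfl⟩ ?_
  rintro _ ⟨G, hG, hFG, rfl⟩
  exact hy G hG hFG

theorem le_lcMaj (hF : BddAbove (F '' Icc 0 L)) (hu : u ∈ Icc 0 L) : F u ≤ lcMaj L F u :=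
  le_lcMaj_of_forall hF fun _ _ hFG ↦ hFG u hu

theorem concaveOn_lcMaj (hF : BddAbove (F '' Icc 0 L)) : ConcaveOn ℝ (Icc 0 L) (lcMaj L F) := by
  refine ⟨convex_Icc 0 L, fun x hx y hy α β hα hβ hαβ ↦ le_lcMaj_of_forall hF fun G hG hFG ↦ ?_⟩
  calc α • lcMaj L F x + β • lcMaj L F y ≤ α • G x + β • G y := by
        gcongr
        · exact lcMaj_le hG hFG hx
        · exact lcMaj_le hG hFG hy
    _ ≤ G (α • x + β • y) := hG.2 hx hy hα hβ hαβ

/-- A steep affine function through `(L, F L + ε)` dominates `F`. -/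
theorem lcMaj_right_endpoint (hL : 0 ≤ L) (hF : BddAbove (F '' Icc 0 L))
    (hFL : ContinuousWithinAt F (Icc 0 L) L) : lcMaj L F L = F L := by
  have hLmem : L ∈ Icc 0 L := right_mem_Icc.2 hL
  refine le_antisymm (le_of_forall_pos_le_add fun ε hε ↦ ?_) (le_lcMaj hF hLmem)
  obtain ⟨C, hC⟩ := hF
  replace hC : ∀ x ∈ Icc 0 L, F x ≤ C := fun x hx ↦ hC (mem_image_of_mem F hx)
  obtain ⟨δ, hδ, hFδ⟩ := Metric.continuousWithinAt_iff.1 hFL ε hε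
  set k := (C - F L) / δ
  have hk₀ : 0 ≤ k := div_nonneg (sub_nonneg.2 (hC L hLmem)) hδ.le
  have hkδ : k * δ = C - F L := div_mul_cancel₀ _ hδ.ne'
  have hdom : ∀ x ∈ Icc 0 L, F x ≤ -k * x + (F L + ε + k * L) := by
    intro x hx
    rcases lt_or_ge (L - x) δ with hnear | hfar
    · have hdist : dist x L < δ := by
        rwa [dist_comm, Real.dist_eq, abs_of_nonneg (sub_nonneg.2 hx.2)]
      have hclose : F x - F L < ε := (abs_lt.1 (hFδ hx hdist)).2
      linarith [mul_nonneg hk₀ (sub_nonneg.2 hx.2)]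
    · linarith [hC x hx, mul_le_mul_of_nonneg_left hfar hk₀]
  linarith [lcMaj_le (concaveOn_affine (-k) (F L + ε + k * L) (convex_Icc 0 L)) hdom hLmem]

end LeastConcaveMajorant

section ConcavePrimitive

variable {f : ℝ → ℝ} {a b p q : ℝ}

theorem ae_nonneg_of_monotoneOn_primitive (hf : IntervalIntegrable f volume a b)
    (hpq : Icc p q ⊆ Icc a b) (hmono : MonotoneOn (fun u ↦ ∫ w in a..u, f w) (Icc p q)) :
    ∀ᵐ x, x ∈ Ioc p q → 0 ≤ f x := by
  filter_upwards [hf.ae_hasDerivAt_integral] with x hderiv hx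
  have hxpq : x ∈ Icc p q := Ioc_subset_Icc_self hx
  have hxab : x ∈ uIcc a b := Icc_subset_uIcc (hpq hxpq)
  have hunique : UniqueDiffWithinAt ℝ (Icc p q) x :=
    uniqueDiffOn_Icc (hx.1.trans_le hx.2) x hxpq
  rw [← (hderiv hxab a left_mem_uIcc).hasDerivWithinAt.derivWithin hunique]
  exact hmono.derivWithin_nonneg

theorem ae_nonpos_of_antitoneOn_primitive (hf : IntervalIntegrable f volume a b)
    (hpq : Icc p q ⊆ Icc a b) (hanti : AntitoneOn (fun u ↦ ∫ w in a..u, f w) (Icc p q)) :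
    ∀ᵐ x, x ∈ Ioc p q → f x ≤ 0 := by
  have hneg := ae_nonneg_of_monotoneOn_primitive hf.neg hpq
    (by simpa only [Pi.neg_apply, intervalIntegral.integral_neg] using! hanti.neg)
  filter_upwards [hneg] with x hx hxpq
  exact neg_nonneg.1 (hx hxpq)

theorem intervalIntegrable_posPart (hf : IntervalIntegrable f volume a b) :
    IntervalIntegrable (fun x ↦ max (f x) 0) volume a b :=
  ⟨hf.1.pos_part, hf.2.pos_part⟩

theorem exists_integral_posPart_eq_of_concaveOn_primitive (hab : a ≤ b)
    (hf : IntervalIntegrable f volume a b)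
    (hconc : ConcaveOn ℝ (Icc a b) fun u ↦ ∫ w in a..u, f w) :
    ∃ s ∈ Icc a b, ∫ w in a..b, max (f w) 0 = ∫ w in a..s, f w := by
  set H : ℝ → ℝ := fun u ↦ ∫ w in a..u, f w
  have hcont : ContinuousOn H (Icc a b) := by
    simpa only [uIcc_of_le hab] using
      intervalIntegral.continuousOn_primitive_interval' hf left_mem_uIcc
  obtain ⟨s, hs, hmax⟩ := isCompact_Icc.exists_isMaxOn (nonempty_Icc.2 hab) hcont
  have hleft : Icc a s ⊆ Icc a b := Icc_subset_Icc_right hs.2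
  have hright : Icc s b ⊆ Icc a b := Icc_subset_Icc_left hs.1
  have hmono : MonotoneOn H (Icc a s) := fun x hx y hy hxy ↦
    (le_min le_rfl (hmax (hleft hx))).trans
      (hconc.min_le_of_mem_Icc (hleft hx) hs ⟨hxy, hy.2⟩)
  have hanti : AntitoneOn H (Icc s b) := fun x hx y hy hxy ↦
    (le_min (hmax (hright hy)) le_rfl).trans
      (hconc.min_le_of_mem_Icc hs (hright hy) ⟨hx.1, hxy⟩)
  have hpos := intervalIntegrable_posPart hf
  have hs' : s ∈ uIcc a b := Icc_subset_uIcc hs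
  have hintL : ∫ w in a..s, max (f w) 0 = H s := by
    refine intervalIntegral.integral_congr_ae ?_
    filter_upwards [ae_nonneg_of_monotoneOn_primitive hf hleft hmono] with x hx hxs
    exact max_eq_left (hx (uIoc_of_le hs.1 ▸ hxs))
  have hintR : ∫ w in s..b, max (f w) 0 = 0 := by
    refine intervalIntegral.integral_zero_ae ?_
    filter_upwards [ae_nonpos_of_antitoneOn_primitive hf hright hanti] with x hx hxs
    exact max_eq_right (hx (uIoc_of_le hs.2 ▸ hxs))
  refine ⟨s, hs, ?_⟩
  rw [← intervalIntegral.integral_add_adjacent_intervals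
    (hpos.mono_set (uIcc_subset_uIcc_left hs')) (hpos.mono_set (uIcc_subset_uIcc_right hs')),
    hintL, hintR, add_zero]

end ConcavePrimitive

section HingeComparison

variable {L c : ℝ} {F f φ : ℝ → ℝ}

theorem primitive_sub_const (hf : IntervalIntegrable f volume 0 L) {u : ℝ} (hu : u ∈ Icc 0 L) :
    ∫ w in 0..u, (f w - c) = (∫ w in 0..u, f w) - c * u := by
  have hfu : IntervalIntegrable f volume 0 u :=
    hf.mono_set (uIcc_subset_uIcc_left (Icc_subset_uIcc hu))
  rw [intervalIntegral.integral_sub hfu intervalIntegrable_const, intervalIntegral.integral_const,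
    sub_zero, smul_eq_mul, mul_comm]

theorem integral_le_mul_add_integral_hinge (hf : IntervalIntegrable f volume 0 L) (c : ℝ) {u : ℝ}
    (hu : u ∈ Icc 0 L) :
    ∫ w in 0..u, f w ≤ c * u + ∫ w in 0..L, max (f w - c) 0 := by
  have hfc : IntervalIntegrable (fun w ↦ f w - c) volume 0 L := hf.sub intervalIntegrable_const
  have hsub : uIcc 0 u ⊆ uIcc 0 L := uIcc_subset_uIcc_left (Icc_subset_uIcc hu)
  have hpos := intervalIntegrable_posPart hfc
  have hchain : ∫ w in 0..u, (f w - c) ≤ ∫ w in 0..L, max (f w - c) 0 :=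
    calc ∫ w in 0..u, (f w - c) ≤ ∫ w in 0..u, max (f w - c) 0 :=
          intervalIntegral.integral_mono_on hu.1 (hfc.mono_set hsub) (hpos.mono_set hsub)
            fun w _ ↦ le_max_left _ _
      _ ≤ ∫ w in 0..L, max (f w - c) 0 :=
          intervalIntegral.integral_mono_interval le_rfl hu.1 hu.2
            (ae_of_all _ fun w ↦ le_max_right _ _) hpos
  linarith [primitive_sub_const (c := c) hf hu]

theorem integral_hinge_le_of_primitive_eq_lcMaj (hL : 0 ≤ L) (hF : BddAbove (F '' Icc 0 L))
    (hf : IntervalIntegrable f volume 0 L)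
    (hfF : ∀ u ∈ Icc 0 L, ∫ w in 0..u, f w = lcMaj L F u)
    (hφ : IntervalIntegrable φ volume 0 L) (hφF : ∀ u ∈ Icc 0 L, F u ≤ ∫ w in 0..u, φ w) (c : ℝ) :
    ∫ w in 0..L, max (f w - c) 0 ≤ ∫ w in 0..L, max (φ w - c) 0 := by
  have hconc : ConcaveOn ℝ (Icc 0 L) fun u ↦ ∫ w in 0..u, (f w - c) := by
    refine ((concaveOn_lcMaj hF).add (concaveOn_affine (-c) 0 (convex_Icc 0 L))).congr
      fun u hu ↦ ?_
    rw [Pi.add_apply, primitive_sub_const hf hu, hfF u hu]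
    ring
  obtain ⟨s, hs, hfs⟩ := exists_integral_posPart_eq_of_concaveOn_primitive hL
    (hf.sub intervalIntegrable_const) hconc
  have hmaj : lcMaj L F s ≤ c * s + ∫ w in 0..L, max (φ w - c) 0 :=
    lcMaj_le (concaveOn_affine c _ (convex_Icc 0 L))
      (fun u hu ↦ (hφF u hu).trans (integral_le_mul_add_integral_hinge hφ c hu)) hs
  rw [hfs, primitive_sub_const hf hs, hfF s hs]
  linarith

end HingeComparison

section HingeInterpolation

variable {ψ : ℝ → ℝ} {t : ℕ → ℝ} {n : ℕ} {x : ℝ}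

/-- The piecewise linear interpolant of `ψ` at the nodes `t 0 < ⋯ < t n`, constant outside
`[t 0, t n]`. It is written as a combination of hinges `x ↦ max (x - c) 0`, so that its integral is
controlled by the integrals of hinges. -/
def hingeInterpolant (ψ : ℝ → ℝ) (t : ℕ → ℝ) (n : ℕ) (x : ℝ) : ℝ :=
  ψ (t 0) + ∑ i ∈ Finset.range n,
    slope ψ (t i) (t (i + 1)) * (max (x - t i) 0 - max (x - t (i + 1)) 0)

theorem hingeInterpolant_succ (ψ : ℝ → ℝ) (t : ℕ → ℝ) (n : ℕ) (x : ℝ) :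
    hingeInterpolant ψ t (n + 1) x = hingeInterpolant ψ t n x +
      slope ψ (t n) (t (n + 1)) * (max (x - t n) 0 - max (x - t (n + 1)) 0) := by
  rw [hingeInterpolant, Finset.sum_range_succ, ← add_assoc, ← hingeInterpolant]

theorem hingeInterpolant_of_last_le (ht : StrictMono t) (hx : t n ≤ x) :
    hingeInterpolant ψ t n x = ψ (t n) := by
  have hterm : ∀ i ∈ Finset.range n,
      slope ψ (t i) (t (i + 1)) * (max (x - t i) 0 - max (x - t (i + 1)) 0) =
        ψ (t (i + 1)) - ψ (t i) := by
    intro i hi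
    have hin : i + 1 ≤ n := Finset.mem_range.1 hi
    have hi₁ : t (i + 1) ≤ x := (ht.monotone hin).trans hx
    have hi₀ : t i ≤ x := (ht.monotone i.le_succ).trans hi₁
    rw [max_eq_left (sub_nonneg.2 hi₀), max_eq_left (sub_nonneg.2 hi₁), sub_sub_sub_cancel_left,
      mul_comm, ← smul_eq_mul, sub_smul_slope, vsub_eq_sub]
  rw [hingeInterpolant, Finset.sum_congr rfl hterm, Finset.sum_range_sub (fun i ↦ ψ (t i)),
    add_sub_cancel]

theorem hingeInterpolant_of_mem_last (ht : StrictMono t) (hx : x ∈ Icc (t n) (t (n + 1))) :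
    hingeInterpolant ψ t (n + 1) x = ψ (t n) + slope ψ (t n) (t (n + 1)) * (x - t n) := by
  rw [hingeInterpolant_succ, hingeInterpolant_of_last_le ht hx.1,
    max_eq_left (sub_nonneg.2 hx.1), max_eq_right (sub_nonpos.2 hx.2), sub_zero]

theorem exists_hingeInterpolant_eq_secant (ht : StrictMono t)
    (hx : x ∈ Icc (t 0) (t (n + 1))) :
    ∃ i ≤ n, x ∈ Icc (t i) (t (i + 1)) ∧
      hingeInterpolant ψ t (n + 1) x = ψ (t i) + slope ψ (t i) (t (i + 1)) * (x - t i) := by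
  induction n with
  | zero => exact ⟨0, le_rfl, hx, hingeInterpolant_of_mem_last ht hx⟩
  | succ k ih =>
    rcases le_total (t (k + 1)) x with hlast | hprev
    · exact ⟨k + 1, le_rfl, ⟨hlast, hx.2⟩, hingeInterpolant_of_mem_last ht ⟨hlast, hx.2⟩⟩
    · obtain ⟨i, hi, hxi, hval⟩ := ih ⟨hx.1, hprev⟩
      have hnext : x ≤ t (k + 1 + 1) := hprev.trans (ht.monotone (k + 1).le_succ)
      refine ⟨i, hi.trans k.le_succ, hxi, ?_⟩
      rw [hingeInterpolant_succ, hval, max_eq_right (sub_nonpos.2 hprev),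
        max_eq_right (sub_nonpos.2 hnext), sub_zero, mul_zero, add_zero]

theorem le_secant_of_convexOn {s : Set ℝ} (hψ : ConvexOn ℝ s ψ) {y z : ℝ} (hy : y ∈ s) (hz : z ∈ s)
    (hx : x ∈ Icc y z) : ψ x ≤ ψ y + slope ψ y z * (x - y) := by
  rcases hx.1.eq_or_lt with rfl | hyx
  · simp
  have hxs : x ∈ s := hψ.1.ordConnected.out hy hz hx
  have hslope : slope ψ y x ≤ slope ψ y z :=
    hψ.slope_mono hy ⟨hxs, hyx.ne'⟩ ⟨hz, (hyx.trans_le hx.2).ne'⟩ hx.2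
  calc ψ x = ψ y + slope ψ y x * (x - y) := by
        rw [mul_comm, ← smul_eq_mul, sub_smul_slope, vsub_eq_sub, add_sub_cancel]
    _ ≤ ψ y + slope ψ y z * (x - y) := by gcongr

theorem secant_le_max {y z : ℝ} (hx : x ∈ Icc y z) :
    ψ y + slope ψ y z * (x - y) ≤ max (ψ y) (ψ z) := by
  have hxy : 0 ≤ x - y := sub_nonneg.2 hx.1
  rcases le_total (slope ψ y z) 0 with hneg | hpos
  · exact le_max_of_le_left (by linarith [mul_nonpos_of_nonpos_of_nonneg hneg hxy])
  · refine le_max_of_le_right ?_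
    calc ψ y + slope ψ y z * (x - y) ≤ ψ y + slope ψ y z * (z - y) := by gcongr; exact hx.2
      _ = ψ z := by rw [mul_comm, ← smul_eq_mul, sub_smul_slope, vsub_eq_sub, add_sub_cancel]

theorem exists_nodes_of_continuousOn {a b ε : ℝ} (hab : a < b) (hψ : ContinuousOn ψ (Icc a b))
    (hε : 0 < ε) :
    ∃ (t : ℕ → ℝ) (n : ℕ), StrictMono t ∧ t 0 = a ∧ t (n + 1) = b ∧
      ∀ i ≤ n, ∀ x ∈ Icc (t i) (t (i + 1)), ∀ y ∈ Icc (t i) (t (i + 1)), |ψ x - ψ y| < ε := by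
  obtain ⟨δ, hδ, hψδ⟩ := Metric.uniformContinuousOn_iff.1
    (isCompact_Icc.uniformContinuousOn_of_continuous hψ) ε hε
  obtain ⟨n, hn⟩ := exists_nat_gt ((b - a) / δ)
  have hn₁ : (0 : ℝ) < n + 1 := n.cast_add_one_pos
  set h := (b - a) / (n + 1) with hh
  have hh₀ : 0 < h := div_pos (sub_pos.2 hab) hn₁
  have hhδ : h < δ := (div_lt_comm₀ hδ hn₁).1 (hn.trans (lt_add_one _))
  have hmono : StrictMono fun i : ℕ ↦ a + i * h := fun i j hij ↦
    (add_lt_add_iff_left a).2 (mul_lt_mul_of_pos_right (Nat.cast_lt.2 hij) hh₀)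
  have hlast : a + (n + 1 : ℕ) * h = b := by
    rw [hh, Nat.cast_succ, mul_div_cancel₀ _ hn₁.ne', add_sub_cancel]
  refine ⟨fun i ↦ a + i * h, n, hmono, by simp, hlast, fun i hi x hx y hy ↦ ?_⟩
  have hcell : Icc (a + i * h) (a + (i + 1 : ℕ) * h) ⊆ Icc a b := by
    refine Icc_subset_Icc (by simpa using by positivity) (hlast ▸ ?_)
    exact hmono.monotone (Nat.succ_le_succ hi)
  refine hψδ x (hcell hx) y (hcell hy) ((Real.dist_le_of_mem_Icc hx hy).trans_lt ?_)
  push_cast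
  linarith

theorem exists_hingeInterpolant_mem_Icc {a b ε : ℝ} (hab : a < b) (hψ : ConvexOn ℝ (Icc a b) ψ)
    (hψc : ContinuousOn ψ (Icc a b)) (hε : 0 < ε) :
    ∃ (t : ℕ → ℝ) (n : ℕ), StrictMono t ∧ t 0 = a ∧ t n = b ∧
      ∀ x ∈ Icc a b, hingeInterpolant ψ t n x ∈ Icc (ψ x) (ψ x + ε) := by
  obtain ⟨t, n, ht, rfl, rfl, hosc⟩ := exists_nodes_of_continuousOn hab hψc hε
  refine ⟨t, n + 1, ht, rfl, rfl, fun x hx ↦ ?_⟩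
  obtain ⟨i, hi, hxi, hval⟩ := exists_hingeInterpolant_eq_secant (ψ := ψ) ht hx
  have hnode : ∀ j ≤ n + 1, t j ∈ Icc (t 0) (t (n + 1)) := fun j hj ↦
    ⟨ht.monotone j.zero_le, ht.monotone hj⟩
  have hstep : t i ≤ t (i + 1) := ht.monotone i.le_succ
  have hleft := (abs_lt.1 (hosc i hi _ (left_mem_Icc.2 hstep) x hxi)).2
  have hright := (abs_lt.1 (hosc i hi _ (right_mem_Icc.2 hstep) x hxi)).2
  rw [hval]
  refine ⟨le_secant_of_convexOn hψ (hnode i (by lia)) (hnode (i + 1) (by lia)) hxi,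
    (secant_le_max hxi).trans (max_le ?_ ?_)⟩ <;> linarith

end HingeInterpolation

section ConvexOrder

theorem sum_mul_sub_succ_nonneg {s D : ℕ → ℝ} {n : ℕ} (hs : ∀ i, i + 1 < n → s i ≤ s (i + 1))
    (hD : ∀ i, 0 ≤ D i) (hD₀ : D 0 = 0) (hDn : D n = 0) :
    0 ≤ ∑ i ∈ Finset.range n, s i * (D i - D (i + 1)) := by
  have habel := Finset.sum_range_by_parts s (fun i ↦ D i - D (i + 1)) n
  simp only [smul_eq_mul, Finset.sum_range_sub', hD₀, hDn, sub_zero, zero_sub, mul_zero, mul_neg,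
    Finset.sum_neg_distrib, neg_neg] at habel
  rw [habel]
  refine Finset.sum_nonneg fun i hi ↦ mul_nonneg (sub_nonneg.2 (hs i ?_)) (hD _)
  have := Finset.mem_range.1 hi
  lia

variable {α : Type*} [MeasurableSpace α] {μ : Measure α} {f φ : α → ℝ} {ψ : ℝ → ℝ} {a b : ℝ}

theorem integral_hinge_eq_zero_of_ae_le {c : ℝ} (hc : ∀ᵐ x ∂μ, f x ≤ c) :
    ∫ x, max (f x - c) 0 ∂μ = 0 :=
  integral_eq_zero_of_ae (hc.mono fun _ hx ↦ max_eq_right (sub_nonpos.2 hx))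

variable [IsFiniteMeasure μ]

theorem integral_hinge_eq_of_ae_ge (hf : Integrable f μ) {c : ℝ} (hc : ∀ᵐ x ∂μ, c ≤ f x) :
    ∫ x, max (f x - c) 0 ∂μ = ∫ x, f x ∂μ - μ.real univ * c := by
  have heq : (fun x ↦ max (f x - c) 0) =ᵐ[μ] fun x ↦ f x - c :=
    hc.mono fun x hx ↦ max_eq_left (sub_nonneg.2 hx)
  rw [integral_congr_ae heq, integral_sub hf (integrable_const c), integral_const, smul_eq_mul]

theorem integrable_hinge (hf : Integrable f μ) (c : ℝ) :
    Integrable (fun x ↦ max (f x - c) 0) μ :=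
  (hf.sub (integrable_const c)).pos_part

theorem integrable_hingeInterpolant_comp (hf : Integrable f μ) (ψ : ℝ → ℝ) (t : ℕ → ℝ) (n : ℕ) :
    Integrable (fun x ↦ hingeInterpolant ψ t n (f x)) μ :=
  (integrable_const _).add (integrable_finsetSum _ fun _ _ ↦
    ((integrable_hinge hf _).sub (integrable_hinge hf _)).const_mul _)

theorem integral_hingeInterpolant_comp (hf : Integrable f μ) (ψ : ℝ → ℝ) (t : ℕ → ℝ) (n : ℕ) :
    ∫ x, hingeInterpolant ψ t n (f x) ∂μ = μ.real univ * ψ (t 0) +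
      ∑ i ∈ Finset.range n, slope ψ (t i) (t (i + 1)) *
        (∫ x, max (f x - t i) 0 ∂μ - ∫ x, max (f x - t (i + 1)) 0 ∂μ) := by
  have hhinge := integrable_hinge hf
  have hterm : ∀ i ∈ Finset.range n, Integrable (fun x ↦ slope ψ (t i) (t (i + 1)) *
      (max (f x - t i) 0 - max (f x - t (i + 1)) 0)) μ :=
    fun i _ ↦ ((hhinge _).sub (hhinge _)).const_mul _
  simp only [hingeInterpolant]
  rw [integral_add (integrable_const _) (integrable_finsetSum _ hterm),
    integral_finsetSum _ hterm, integral_const, smul_eq_mul]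
  simp only [integral_const_mul, integral_sub (hhinge _) (hhinge _)]

theorem integral_hingeInterpolant_comp_le {t : ℕ → ℝ} {n : ℕ} (ht : StrictMono t)
    (hψ : ConvexOn ℝ (Icc (t 0) (t n)) ψ) (hf : Integrable f μ)
    (hφ : Integrable φ μ) (hft : ∀ᵐ x ∂μ, f x ∈ Icc (t 0) (t n))
    (hφt : ∀ᵐ x ∂μ, φ x ∈ Icc (t 0) (t n)) (hmean : ∫ x, f x ∂μ = ∫ x, φ x ∂μ)
    (hhinge : ∀ c, ∫ x, max (f x - c) 0 ∂μ ≤ ∫ x, max (φ x - c) 0 ∂μ) :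
    ∫ x, hingeInterpolant ψ t n (f x) ∂μ ≤ ∫ x, hingeInterpolant ψ t n (φ x) ∂μ := by
  set D : ℕ → ℝ := fun i ↦ ∫ x, max (φ x - t i) 0 ∂μ - ∫ x, max (f x - t i) 0 ∂μ with hD
  have hD₀ : D 0 = 0 := by
    simp only [hD, integral_hinge_eq_of_ae_ge hf (hft.mono fun _ h ↦ h.1),
      integral_hinge_eq_of_ae_ge hφ (hφt.mono fun _ h ↦ h.1), hmean, sub_self]
  have hDn : D n = 0 := by
    simp only [hD, integral_hinge_eq_zero_of_ae_le (hft.mono fun _ h ↦ h.2),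
      integral_hinge_eq_zero_of_ae_le (hφt.mono fun _ h ↦ h.2), sub_self]
  have hslope : ∀ i, i + 1 < n →
      slope ψ (t i) (t (i + 1)) ≤ slope ψ (t (i + 1)) (t (i + 1 + 1)) := by
    intro i hi
    have hnode : ∀ j ≤ n, t j ∈ Icc (t 0) (t n) := fun j hj ↦
      ⟨ht.monotone j.zero_le, ht.monotone hj⟩
    simpa only [slope_def_field] using hψ.slope_mono_adjacent (hnode i (by lia))
      (hnode (i + 1 + 1) hi) (ht i.lt_succ_self) (ht (i + 1).lt_succ_self)
  rw [integral_hingeInterpolant_comp hf, integral_hingeInterpolant_comp hφ, ← sub_nonneg,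
    add_sub_add_left_eq_sub, ← Finset.sum_sub_distrib]
  convert sum_mul_sub_succ_nonneg hslope (fun i ↦ sub_nonneg.2 (hhinge (t i))) hD₀ hDn using 2
  ring

theorem integrable_comp_of_continuousOn_Icc (hab : a ≤ b) (hψ : ContinuousOn ψ (Icc a b))
    (hf : AEMeasurable f μ) (hfab : ∀ᵐ x ∂μ, f x ∈ Icc a b) : Integrable (fun x ↦ ψ (f x)) μ := by
  have hcont : Continuous (IccExtend hab ((Icc a b).domRestrict ψ)) := hψ.domRestrict.Icc_extend'
  have hext : IccExtend hab ((Icc a b).domRestrict ψ) ∘ f =ᵐ[μ] fun x ↦ ψ (f x) :=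
    hfab.mono fun x hx ↦ IccExtend_of_mem hab _ hx
  obtain ⟨C, hC⟩ := isCompact_Icc.exists_bound_of_continuousOn hψ
  exact .of_bound ((hcont.measurable.comp_aemeasurable hf).congr hext).aestronglyMeasurable C
    (hfab.mono fun x hx ↦ hC (f x) hx)

theorem integral_comp_le_integral_comp_of_integral_hinge_le (hab : a < b)
    (hψ : ConvexOn ℝ (Icc a b) ψ) (hψc : ContinuousOn ψ (Icc a b)) (hf : AEMeasurable f μ)
    (hφ : AEMeasurable φ μ) (hfab : ∀ᵐ x ∂μ, f x ∈ Icc a b) (hφab : ∀ᵐ x ∂μ, φ x ∈ Icc a b)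
    (hmean : ∫ x, f x ∂μ = ∫ x, φ x ∂μ)
    (hhinge : ∀ c, ∫ x, max (f x - c) 0 ∂μ ≤ ∫ x, max (φ x - c) 0 ∂μ) :
    ∫ x, ψ (f x) ∂μ ≤ ∫ x, ψ (φ x) ∂μ := by
  have hfi : Integrable f μ := .of_mem_Icc a b hf hfab
  have hφi : Integrable φ μ := .of_mem_Icc a b hφ hφab
  have hψf := integrable_comp_of_continuousOn_Icc hab.le hψc hf hfab
  have hψφ := integrable_comp_of_continuousOn_Icc hab.le hψc hφ hφab
  have happrox : ∀ ε > 0, ∫ x, ψ (f x) ∂μ ≤ ∫ x, ψ (φ x) ∂μ + μ.real univ * ε := by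
    intro ε hε
    obtain ⟨t, n, ht, rfl, rfl, hP⟩ := exists_hingeInterpolant_mem_Icc hab hψ hψc hε
    calc ∫ x, ψ (f x) ∂μ ≤ ∫ x, hingeInterpolant ψ t n (f x) ∂μ :=
          integral_mono_ae hψf (integrable_hingeInterpolant_comp hfi ψ t n)
            (hfab.mono fun x hx ↦ (hP _ hx).1)
      _ ≤ ∫ x, hingeInterpolant ψ t n (φ x) ∂μ :=
          integral_hingeInterpolant_comp_le ht hψ hfi hφi hfab hφab hmean hhinge
      _ ≤ ∫ x, (ψ (φ x) + ε) ∂μ :=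
          integral_mono_ae (integrable_hingeInterpolant_comp hφi ψ t n)
            (hψφ.add (integrable_const ε)) (hφab.mono fun x hx ↦ (hP _ hx).2)
      _ = ∫ x, ψ (φ x) ∂μ + μ.real univ * ε := by
          rw [integral_add hψφ (integrable_const ε), integral_const, smul_eq_mul]
  have hlim : Filter.Tendsto (fun ε ↦ ∫ x, ψ (φ x) ∂μ + μ.real univ * ε) (nhdsWithin 0 (Ioi 0))
      (nhds (∫ x, ψ (φ x) ∂μ)) := by
    refine Continuous.tendsto' (by fun_prop) _ _ (by simp) |>.mono_left nhdsWithin_le_nhds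
  exact ge_of_tendsto hlim (eventually_mem_nhdsWithin.mono happrox)

end ConvexOrder

section RelativeEntropy

variable {m x : ℝ}

theorem hFun_eq_neg_binEntropy (hm : m ∈ Ioo (0 : ℝ) 1) :
    hFun m x = -Real.binEntropy x + (x * (Real.log (1 - m) - Real.log m) - Real.log (1 - m)) := by
  have hlog_div : ∀ y d : ℝ, d ≠ 0 →
      y * Real.log (y / d) = y * Real.log y - y * Real.log d := by
    intro y d hd
    rcases eq_or_ne y 0 with rfl | hy
    · simp
    · rw [Real.log_div hy hd, mul_sub]
  rw [hFun, hlog_div x m hm.1.ne', hlog_div (1 - x) (1 - m) (sub_pos.2 hm.2).ne', Real.binEntropy,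
    Real.log_inv, Real.log_inv]
  ring

theorem convexOn_hFun (hm : m ∈ Ioo (0 : ℝ) 1) : ConvexOn ℝ (Icc 0 1) (hFun m) := by
  have haff := (concaveOn_affine (Real.log m - Real.log (1 - m)) (Real.log (1 - m))
    (convex_Icc (0 : ℝ) 1)).neg
  refine (Real.strictConcave_binEntropy.concaveOn.neg.add haff).congr fun x _ ↦ ?_
  rw [hFun_eq_neg_binEntropy hm]
  simp only [Pi.add_apply, Pi.neg_apply]
  ring

theorem continuous_hFun_s14 (hm : m ∈ Ioo (0 : ℝ) 1) : Continuous (hFun m) := by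
  refine Continuous.congr ?_ fun _ ↦ (hFun_eq_neg_binEntropy hm).symm
  fun_prop

end RelativeEntropy

theorem intervalIntegrable_of_forall_mem_Icc {f : ℝ → ℝ} {a b : ℝ} (hf : Measurable f)
    (hfab : ∀ u, f u ∈ Icc a b) (p q : ℝ) : IntervalIntegrable f volume p q :=
  ⟨.of_mem_Icc a b hf.aemeasurable (ae_of_all _ hfab),
    .of_mem_Icc a b hf.aemeasurable (ae_of_all _ hfab)⟩

theorem stmt14_general {a b L : ℝ} (hab : a < b) (hL : 0 ≤ L) {ψ : ℝ → ℝ}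
    (hψ : ConvexOn ℝ (Icc a b) ψ) (hψc : ContinuousOn ψ (Icc a b)) {F : ℝ → ℝ}
    (hF : ContinuousOn F (Icc 0 L)) {ghat : ℝ → ℝ} (hghatint : IntervalIntegrable ghat volume 0 L)
    (hghatrange : ∀ u ∈ Icc 0 L, ghat u ∈ Icc a b)
    (hghat : ∀ u ∈ Icc 0 L, ∫ w in 0..u, ghat w = lcMaj L F u) :
    ((∀ u ∈ Icc 0 L, F u ≤ ∫ w in 0..u, ghat w) ∧ ∫ w in 0..L, ghat w = F L) ∧
    ∀ φ : ℝ → ℝ, IntervalIntegrable φ volume 0 L → (∀ u ∈ Icc 0 L, φ u ∈ Icc a b) →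
      (∀ u ∈ Icc 0 L, F u ≤ ∫ w in 0..u, φ w) → ∫ w in 0..L, φ w = F L →
      ∫ u in 0..L, ψ (ghat u) ≤ ∫ u in 0..L, ψ (φ u) := by
  have hbdd : BddAbove (F '' Icc 0 L) := isCompact_Icc.bddAbove_image hF
  have hLmem : L ∈ Icc 0 L := right_mem_Icc.2 hL
  have hend : ∫ w in 0..L, ghat w = F L :=
    (hghat L hLmem).trans (lcMaj_right_endpoint hL hbdd (hF L hLmem))
  refine ⟨⟨fun u hu ↦ (le_lcMaj hbdd hu).trans_eq (hghat u hu).symm, hend⟩,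
    fun φ hφ hφab hφF hφL ↦ ?_⟩
  have hhinge := integral_hinge_le_of_primitive_eq_lcMaj hL hbdd hghatint hghat hφ hφF
  have hmean : ∫ w in 0..L, ghat w = ∫ w in 0..L, φ w := hend.trans hφL.symm
  have hrestrict : ∀ {f : ℝ → ℝ}, (∀ u ∈ Icc 0 L, f u ∈ Icc a b) →
      ∀ᵐ u ∂volume.restrict (Ioc 0 L), f u ∈ Icc a b := fun hf ↦
    (ae_restrict_mem measurableSet_Ioc).mono fun u hu ↦ hf u (Ioc_subset_Icc_self hu)
  simp only [intervalIntegral.integral_of_le hL] at hhinge hmean ⊢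
  exact integral_comp_le_integral_comp_of_integral_hinge_le hab hψ hψc hghatint.1.aemeasurable
    hφ.1.aemeasurable (hrestrict hghatrange) (hrestrict hφab) hmean hhinge

/-- the density `ĝ` of the least concave majorant `F̂` of `F(u) = ∫_0^u g`
minimizes `∫_0^L h_m(φ)` among measurable `φ : [0,L] → [0,1]` with `∫_0^u φ ≥ F(u)` for
all `u ∈ [0,L]` and `∫_0^L φ = F(L)`; moreover `ĝ` itself satisfies these constraints,
so the infimum over the constraint set equals `∫_0^L h_m(ĝ)`. -/
theorem stmt14 (m L : ℝ) (hm : m ∈ Set.Ioo (0:ℝ) 1) (hL : 0 < L)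
    (g : ℝ → ℝ) (hgmeas : Measurable g) (hgrange : ∀ u, g u ∈ Set.Icc (0:ℝ) 1)
    (ghat : ℝ → ℝ) (hghatmeas : Measurable ghat) (hghatrange : ∀ u, ghat u ∈ Set.Icc (0:ℝ) 1)
    (hghat : ∀ u ∈ Set.Icc 0 L,
      (∫ w in (0:ℝ)..u, ghat w) = lcMaj L (fun t => ∫ w in (0:ℝ)..t, g w) u) :
    ((∀ u ∈ Set.Icc 0 L, (∫ w in (0:ℝ)..u, g w) ≤ ∫ w in (0:ℝ)..u, ghat w) ∧
      (∫ w in (0:ℝ)..L, ghat w) = ∫ w in (0:ℝ)..L, g w) ∧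
    (∀ φ : ℝ → ℝ, Measurable φ → (∀ u, φ u ∈ Set.Icc (0:ℝ) 1) →
      (∀ u ∈ Set.Icc 0 L, (∫ w in (0:ℝ)..u, g w) ≤ ∫ w in (0:ℝ)..u, φ w) →
      (∫ w in (0:ℝ)..L, φ w) = ∫ w in (0:ℝ)..L, g w →
      (∫ u in (0:ℝ)..L, hFun m (ghat u)) ≤ ∫ u in (0:ℝ)..L, hFun m (φ u)) := by
  have hF : ContinuousOn (fun u ↦ ∫ w in (0:ℝ)..u, g w) (Icc 0 L) :=
    (intervalIntegral.continuous_primitive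
      (intervalIntegrable_of_forall_mem_Icc hgmeas hgrange) 0).continuousOn
  have hmin := stmt14_general zero_lt_one hL.le (convexOn_hFun hm) (continuous_hFun_s14 hm).continuousOn
    hF (intervalIntegrable_of_forall_mem_Icc hghatmeas hghatrange 0 L)
    (fun u _ ↦ hghatrange u) hghat
  exact ⟨hmin.1, fun φ hφ hφ01 ↦
    hmin.2 φ (intervalIntegrable_of_forall_mem_Icc hφ hφ01 0 L) fun u _ ↦ hφ01 u⟩

end
end
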